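/- arXiv:0709.4017 — 2 statements merged into one kernel-verified Lean document; each statement's English description precedes it below -/
import Mathlib

section
/- Let T = { x ∈ ℝⁿ : f₁(x) ≥ 0, …, fₘ(x) ≥ 0 } be a compact set defined by real polynomials fᵢ, and suppose T has nonempty interior near ∂_cT, i.e., for every u ∈ ∂_cT and every δ > 0 there exists v ∈ B(u, δ) with fᵢ(v) > 0 for all i = 1, …, m. If for every u ∈ ∂_cT and every index i with fᵢ(u) = 0, the polynomial fᵢ is either sos-concave or strictly quasi-concave at u, then conv(T) is SDP representable. -/
open MvPolynomial Metric Set Pointwise Filter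

noncomputable section

/-- `ℝⁿ` with the Euclidean norm. -/
abbrev Rn (n : ℕ) : Type := EuclideanSpace ℝ (Fin n)

/-- A set `S ⊆ ℝⁿ` is SDP representable if it is the projection of a spectrahedron:
there are symmetric matrices `A₀, A i, B j` with
`S = { x | ∃ u, A₀ + Σ xᵢ Aᵢ + Σ uⱼ Bⱼ ⪰ 0 }`. -/
def IsSDPRepresentable {n : ℕ} (S : Set (Rn n)) : Prop :=
  ∃ (N d : ℕ) (A₀ : Matrix (Fin d) (Fin d) ℝ)
    (A : Fin n → Matrix (Fin d) (Fin d) ℝ) (B : Fin N → Matrix (Fin d) (Fin d) ℝ),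
    A₀.IsSymm ∧ (∀ i, (A i).IsSymm) ∧ (∀ j, (B j).IsSymm) ∧
    S = {x : Rn n | ∃ u : Fin N → ℝ,
      (A₀ + ∑ i, x i • A i + ∑ j, u j • B j).PosSemidef}

/-- Evaluation of a polynomial at a point of `ℝⁿ`. -/
def peval {n : ℕ} (g : MvPolynomial (Fin n) ℝ) (x : Rn n) : ℝ :=
  MvPolynomial.eval (fun i => x i) g

/-- The gradient `∇g(u)` of a polynomial. -/
def pgrad {n : ℕ} (g : MvPolynomial (Fin n) ℝ) (u : Rn n) : Fin n → ℝ :=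
  fun i => MvPolynomial.eval (fun j => u j) (MvPolynomial.pderiv i g)

/-- The Hessian `∇²g(u)` of a polynomial. -/
def phess {n : ℕ} (g : MvPolynomial (Fin n) ℝ) (u : Rn n) : Matrix (Fin n) (Fin n) ℝ :=
  Matrix.of fun i j =>
    MvPolynomial.eval (fun k => u k) (MvPolynomial.pderiv i (MvPolynomial.pderiv j g))

/-- A polynomial `g` is sos-concave if `-∇²g(x) = W(x)ᵀ W(x)` for some
(possibly nonsquare) matrix polynomial `W`. -/
def SosConcave {n : ℕ} (g : MvPolynomial (Fin n) ℝ) : Prop :=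
  ∃ (k : ℕ) (W : Fin k → Fin n → MvPolynomial (Fin n) ℝ),
    ∀ i j, - MvPolynomial.pderiv i (MvPolynomial.pderiv j g) = ∑ l, W l i * W l j

/-- `g` is quasi-concave at `u` : `-vᵀ∇²g(u)v ≥ 0` for every `v` with `∇g(u)ᵀv = 0`. -/
def QuasiConcaveAt {n : ℕ} (g : MvPolynomial (Fin n) ℝ) (u : Rn n) : Prop :=
  ∀ v : Fin n → ℝ, (∑ i, pgrad g u i * v i) = 0 →
    0 ≤ -(∑ i, ∑ j, v i * phess g u i j * v j)

/-- `g` is strictly quasi-concave at `u` : if `∇g(u) ≠ 0` then `-vᵀ∇²g(u)v > 0`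
for all nonzero `v ⊥ ∇g(u)`; if `∇g(u) = 0` then `-∇²g(u)` is positive definite. -/
def StrictlyQuasiConcaveAt {n : ℕ} (g : MvPolynomial (Fin n) ℝ) (u : Rn n) : Prop :=
  (pgrad g u ≠ 0 ∧ ∀ v : Fin n → ℝ, v ≠ 0 → (∑ i, pgrad g u i * v i) = 0 →
      0 < -(∑ i, ∑ j, v i * phess g u i j * v j)) ∨
  (pgrad g u = 0 ∧ (-(phess g u)).PosDef)

/-- The convex boundary `∂_c T` : points of `T` minimizing some unit linear functional. -/
def convexBoundary {n : ℕ} (T : Set (Rn n)) : Set (Rn n) :=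
  {u ∈ T | ∃ l : Rn n, ‖l‖ = 1 ∧ ∀ x ∈ T, (∑ i, l i * u i) ≤ ∑ i, l i * x i}

/-- `v` is a nonsingular point of `∂T` (w.r.t. defining polynomials `g`):
exactly one defining polynomial vanishes at `v`, with nonvanishing gradient. -/
def IsNonsingularBoundaryPoint {n m : ℕ} (g : Fin m → MvPolynomial (Fin n) ℝ)
    (T : Set (Rn n)) (v : Rn n) : Prop :=
  v ∈ frontier T ∧ ∃ i, peval (g i) v = 0 ∧ pgrad (g i) v ≠ 0 ∧
    ∀ j, peval (g j) v = 0 → j = i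

/-- A polynomial is SOS if it is a finite sum of squares of polynomials. -/
def IsSOSPoly {n : ℕ} (p : MvPolynomial (Fin n) ℝ) : Prop :=
  ∃ (k : ℕ) (q : Fin k → MvPolynomial (Fin n) ℝ), p = ∑ i, (q i) ^ 2

/-- The polynomial `δ² - ‖x - u‖²`. -/
def ballPoly {n : ℕ} (u : Rn n) (δ : ℝ) : MvPolynomial (Fin n) ℝ :=
  MvPolynomial.C (δ ^ 2) - ∑ i, (MvPolynomial.X i - MvPolynomial.C (u i)) ^ 2

/-- The family `h₁, …, h_{m₂}` extended by the ball polynomial `h_m(x) = δ² - ‖x-u‖²`. -/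
def extFamily {n m2 : ℕ} (h : Fin m2 → MvPolynomial (Fin n) ℝ) (u : Rn n) (δ : ℝ) :
    Fin (m2 + 1) → MvPolynomial (Fin n) ℝ :=
  Fin.snoc h (ballPoly u δ)

/-- The positive definite Lagrange Hessian (PDLH) condition at `u` with radius `δu`,
for the set `T = {x | f(x) = 0, h(x) ≥ 0}`. -/
def PDLHAt {n m1 m2 : ℕ} (f : Fin m1 → MvPolynomial (Fin n) ℝ)
    (h : Fin m2 → MvPolynomial (Fin n) ℝ) (T : Set (Rn n)) (u : Rn n) (δu : ℝ) : Prop :=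
  ∀ l : Rn n, ‖l‖ = 1 → ∀ δ : ℝ, 0 < δ → δ ≤ δu →
    ∀ v ∈ T ∩ closedBall u δ,
      (∀ x ∈ T ∩ closedBall u δ, (∑ i, l i * v i) ≤ ∑ i, l i * x i) →
      ∃ (lam : Fin m1 → ℝ) (mu : Fin (m2 + 1) → ℝ),
        (∀ j, 0 ≤ mu j) ∧
        (∀ j, mu j * peval (extFamily h u δ j) v = 0) ∧
        (∀ i, l i = (∑ k, lam k * pgrad (f k) v i) +
            ∑ j, mu j * pgrad (extFamily h u δ j) v i) ∧
        ∀ x ∈ closedBall u δ,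
          (Matrix.of (fun i i' : Fin n =>
            -(∑ k, lam k * phess (f k) x i i') -
              ∑ j, mu j * phess (extFamily h u δ j) x i i')).PosDef

/-- `Z(g) ∩ ∂S` has strictly convex shape with respect to `S`. -/
def StrictlyConvexShape {n : ℕ} (g : MvPolynomial (Fin n) ℝ) (S : Set (Rn n)) : Prop :=
  ∃ Y U : Set (Rn n), IsOpen U ∧ Y = {x | peval g x = 0} ∩ U ∧
    {x | peval g x = 0} ∩ frontier S ⊆ Y ∧
    (∀ p ∈ closure Y, pgrad g p ≠ 0) ∧
    ∀ p ∈ closure Y,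
      (∃ ε : ℝ, (ε = 1 ∨ ε = -1) ∧
        ∀ q ∈ S ∪ closure Y, ε * (∑ i, pgrad g p i * (q i - p i)) ≤ 0) ∧
      ∀ q ∈ S ∪ closure Y, (∑ i, pgrad g p i * (q i - p i)) = 0 → q = p

/-!
Near `u ∈ ∂_c T`, an active strictly quasi-concave `f` may be replaced by `g = f - (M / 2) f²`,
which has the same sign there and, for large `M`, a negative definite Hessian at `u`. A negative
definite Hessian has a robust certificate: on a small ball around `u`, the form `-zᵀ ∇²g(w) z` lies
in the preordering of the ball constraint on `w`, because the perturbation `∇²g(w) - ∇²g(u)` is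
certifiably `O(δ)`. For sos-concave `f` such a certificate is the hypothesis.

The certificate makes the moment relaxation of `closedBall u δ ∩ {g ≥ 0}` exact. If `L` is a
feasible functional with mean `x`, then `s ↦ L (g (x + s (X - x)))` has derivative `0` at `0` and
nonpositive second derivative on `[0, 1]`, whence the Jensen inequality `L g ≤ g x`.

So every `u ∈ ∂_c T` has a ball whose intersection with `T` is a spectrahedral shadow. Finitely many
such balls cover the compact set `∂_c T`, which determines the convex hull of `T`, and the convex
hull of finitely many compact spectrahedral shadows is again one, by homogenization.
-/

section Spectrahedron

variable {E F : Type*} [AddCommGroup E] [Module ℝ E] [AddCommGroup F] [Module ℝ F]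

/-- A spectrahedron in a real vector space, i.e. the solution set of a linear matrix inequality
`A + B v ⪰ 0`. The space may be infinite-dimensional: moment relaxations are spectrahedra in the
dual of a polynomial ring. -/
def IsSpectrahedron (P : Set E) : Prop :=
  ∃ (ι : Type) (_ : Fintype ι) (A : Matrix ι ι ℝ) (B : E →ₗ[ℝ] Matrix ι ι ℝ),
    A.IsSymm ∧ (∀ v, (B v).IsSymm) ∧ P = {v | (A + B v).PosSemidef}

theorem posSemidef_fromBlocks_zero_iff {ι κ : Type*} [Finite ι] [Finite κ] {M : Matrix ι ι ℝ}
    {N : Matrix κ κ ℝ} :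
    (Matrix.fromBlocks M 0 0 N).PosSemidef ↔ M.PosSemidef ∧ N.PosSemidef := by
  cases nonempty_fintype ι
  cases nonempty_fintype κ
  refine ⟨fun h => ⟨h.submatrix Sum.inl, h.submatrix Sum.inr⟩, fun ⟨hM, hN⟩ => ?_⟩
  refine .of_dotProduct_mulVec_nonneg
    (Matrix.IsHermitian.fromBlocks hM.1 Matrix.conjTranspose_zero hN.1) fun v => ?_
  have hM := hM.dotProduct_mulVec_nonneg (v ∘ Sum.inl)
  have hN := hN.dotProduct_mulVec_nonneg (v ∘ Sum.inr)
  simpa [Matrix.fromBlocks_mulVec, dotProduct, Fintype.sum_sum_type] using add_nonneg hM hN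

theorem posSemidef_unit_iff {M : Matrix Unit Unit ℝ} : M.PosSemidef ↔ 0 ≤ M () () := by
  have hM : M = Matrix.diagonal fun _ => M () () := by ext; simp
  rw [hM, Matrix.posSemidef_diagonal_iff]
  simp

theorem isSpectrahedron_setOf_posSemidef {ι : Type} [Finite ι] (B : E →ₗ[ℝ] Matrix ι ι ℝ)
    (hB : ∀ v, (B v).IsSymm) : IsSpectrahedron {v | (B v).PosSemidef} :=
  ⟨ι, .ofFinite ι, 0, B, Matrix.isSymm_zero, hB, by simp⟩

theorem isSpectrahedron_setOf_le (c : ℝ) (φ : E →ₗ[ℝ] ℝ) : IsSpectrahedron {v | c ≤ φ v} := by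
  refine ⟨Unit, inferInstance, Matrix.of fun _ _ => -c,
    { toFun := fun v => Matrix.of fun _ _ => φ v
      map_add' := fun v w => by ext; simp
      map_smul' := fun a v => by ext; simp }, rfl, fun _ => rfl, ?_⟩
  ext v
  simp [posSemidef_unit_iff]

theorem isSpectrahedron_univ : IsSpectrahedron (univ : Set E) := by
  simpa using isSpectrahedron_setOf_le (E := E) 0 0

theorem isSpectrahedron_empty : IsSpectrahedron (∅ : Set E) := by
  simpa [not_le.2 one_pos] using isSpectrahedron_setOf_le (E := E) 1 0

theorem IsSpectrahedron.inter {P Q : Set E} (hP : IsSpectrahedron P) (hQ : IsSpectrahedron Q) :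
    IsSpectrahedron (P ∩ Q) := by
  obtain ⟨ι, _, A, B, hA, hB, rfl⟩ := hP
  obtain ⟨κ, _, C, D, hC, hD, rfl⟩ := hQ
  refine ⟨ι ⊕ κ, inferInstance, Matrix.fromBlocks A 0 0 C,
    { toFun := fun v => Matrix.fromBlocks (B v) 0 0 (D v)
      map_add' := fun v w => by simp [Matrix.fromBlocks_add]
      map_smul' := fun a v => by simp [Matrix.fromBlocks_smul] },
    hA.fromBlocks Matrix.transpose_zero hC,
    fun v => (hB v).fromBlocks Matrix.transpose_zero (hD v), ?_⟩
  ext v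
  simp [Matrix.fromBlocks_add, posSemidef_fromBlocks_zero_iff]

theorem isSpectrahedron_iInter {ι : Type*} [Finite ι] {P : ι → Set E}
    (hP : ∀ i, IsSpectrahedron (P i)) : IsSpectrahedron (⋂ i, P i) := by
  cases nonempty_fintype ι
  suffices H : ∀ s : Finset ι, IsSpectrahedron (⋂ i ∈ s, P i) by simpa using H Finset.univ
  classical
  intro s
  induction s using Finset.induction_on with
  | empty => simpa using isSpectrahedron_univ
  | insert i s _ ih =>
    rw [Finset.set_biInter_insert]
    exact (hP i).inter ih

theorem isSpectrahedron_setOf_eq (c : ℝ) (φ : E →ₗ[ℝ] ℝ) : IsSpectrahedron {v | φ v = c} := by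
  convert (isSpectrahedron_setOf_le c φ).inter (isSpectrahedron_setOf_le (-c) (-φ)) using 1
  ext v
  simp [le_antisymm_iff, and_comm]

theorem IsSpectrahedron.preimage {P : Set F} (hP : IsSpectrahedron P) (f : E →ₗ[ℝ] F) :
    IsSpectrahedron (f ⁻¹' P) := by
  obtain ⟨ι, _, A, B, hA, hB, rfl⟩ := hP
  exact ⟨ι, inferInstance, A, B ∘ₗ f, hA, fun v => hB (f v), rfl⟩

theorem IsSpectrahedron.prod {P : Set E} {Q : Set F} (hP : IsSpectrahedron P)
    (hQ : IsSpectrahedron Q) : IsSpectrahedron (P ×ˢ Q) :=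
  (hP.preimage (LinearMap.fst ℝ E F)).inter (hQ.preimage (LinearMap.snd ℝ E F))

theorem IsSpectrahedron.convex {P : Set E} (hP : IsSpectrahedron P) : Convex ℝ P := by
  obtain ⟨ι, _, A, B, -, -, rfl⟩ := hP
  intro v hv w hw a b ha hb hab
  have hA : a • A + b • A = A := by rw [← add_smul, hab, one_smul]
  have key : A + B (a • v + b • w) = a • (A + B v) + b • (A + B w) := by
    rw [map_add, map_smul, map_smul, smul_add, smul_add, add_add_add_comm, hA]
  rw [mem_ofPred_eq, key]
  exact (hv.smul ha).add (hw.smul hb)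

end Spectrahedron

section SpectrahedralShadow

variable {F G : Type*} [AddCommGroup F] [Module ℝ F] [AddCommGroup G] [Module ℝ G]

/-- A spectrahedral shadow, i.e. a linear image of a spectrahedron. This is SDP representability
without coordinates: the space of lifting variables is arbitrary and not fixed in advance. -/
def IsSpectrahedralShadow (S : Set F) : Prop :=
  ∃ (E : Type) (_ : AddCommGroup E) (_ : Module ℝ E) (P : Set E) (f : E →ₗ[ℝ] F),
    IsSpectrahedron P ∧ f '' P = S

theorem IsSpectrahedralShadow.image {S : Set F} (hS : IsSpectrahedralShadow S) (g : F →ₗ[ℝ] G) :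
    IsSpectrahedralShadow (g '' S) := by
  obtain ⟨E, _, _, P, f, hP, rfl⟩ := hS
  exact ⟨E, _, _, P, g ∘ₗ f, hP, by simp [image_image]⟩

theorem IsSpectrahedralShadow.inter_isSpectrahedron {S Q : Set F} (hS : IsSpectrahedralShadow S)
    (hQ : IsSpectrahedron Q) : IsSpectrahedralShadow (S ∩ Q) := by
  obtain ⟨E, _, _, P, f, hP, rfl⟩ := hS
  exact ⟨E, _, _, P ∩ f ⁻¹' Q, f, hP.inter (hQ.preimage f), image_inter_preimage f P Q⟩

theorem IsSpectrahedralShadow.prod {S : Set F} {T : Set G} (hS : IsSpectrahedralShadow S)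
    (hT : IsSpectrahedralShadow T) : IsSpectrahedralShadow (S ×ˢ T) := by
  obtain ⟨E, _, _, P, f, hP, rfl⟩ := hS
  obtain ⟨E', _, _, Q, g, hQ, rfl⟩ := hT
  exact ⟨E × E', _, _, P ×ˢ Q, f.prodMap g, hP.prod hQ, (prodMap_image_prod f g P Q)⟩

theorem IsSpectrahedralShadow.convex {S : Set F} (hS : IsSpectrahedralShadow S) :
    Convex ℝ S := by
  obtain ⟨E, _, _, P, f, hP, rfl⟩ := hS
  exact hP.convex.linear_image f

end SpectrahedralShadow

section ConvexHullUnion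

variable {F : Type*} [NormedAddCommGroup F] [NormedSpace ℝ F]

theorem eq_zero_of_forall_add_smul_mem {S : Set F} (hS : Bornology.IsBounded S) {x y : F}
    (h : ∀ t : ℝ, 0 ≤ t → x + t • y ∈ S) : y = 0 := by
  obtain ⟨R, hR⟩ := hS.exists_norm_le
  by_contra hy
  have hy : 0 < ‖y‖ := norm_pos_iff.2 hy
  have hR0 : 0 ≤ R := (norm_nonneg _).trans (hR _ (h 0 le_rfl))
  set t := (R + ‖x‖ + 1) / ‖y‖
  have ht : 0 ≤ t := by positivity
  have : ‖t • y‖ ≤ R + ‖x‖ := calc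
    ‖t • y‖ = ‖(x + t • y) - x‖ := by rw [add_sub_cancel_left]
    _ ≤ ‖x + t • y‖ + ‖x‖ := norm_sub_le _ _
    _ ≤ R + ‖x‖ := by gcongr; exact hR _ (h t ht)
  rw [norm_smul, Real.norm_of_nonneg ht, div_mul_cancel₀ _ hy.ne'] at this
  linarith

/-- The closed cone over `{1} × S`. At height `0`, homogenizing a linear matrix inequality only
leaves recession directions of `S`, and a bounded set has none. -/
theorem IsSpectrahedralShadow.homogenize {S : Set F} (hS : IsSpectrahedralShadow S)
    (hne : S.Nonempty) (hbdd : Bornology.IsBounded S) :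
    IsSpectrahedralShadow {p : ℝ × F | 0 ≤ p.1 ∧ p.2 ∈ p.1 • S} := by
  obtain ⟨E, _, _, _, f, ⟨ι, _, A, B, hA, hB, rfl⟩, rfl⟩ := hS
  let H : ℝ × E →ₗ[ℝ] Matrix ι ι ℝ := (LinearMap.toSpanSingleton ℝ _ A).coprod B
  refine ⟨ℝ × E, _, _, {p | 0 ≤ p.1} ∩ {p | (H p).PosSemidef}, LinearMap.id.prodMap f,
    (isSpectrahedron_setOf_le 0 (LinearMap.fst ℝ ℝ E)).inter
      (isSpectrahedron_setOf_posSemidef H fun p => (hA.smul p.1).add (hB p.2)), ?_⟩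
  obtain ⟨_, v₀, hv₀, rfl⟩ := hne
  ext ⟨t, y⟩
  constructor
  · rintro ⟨⟨t, v⟩, ⟨ht, hv⟩, ⟨⟩⟩
    refine ⟨ht, ?_⟩
    change 0 ≤ t at ht
    have hv : (t • A + B v).PosSemidef := by simpa [H] using hv
    rcases ht.eq_or_lt with rfl | ht
    · have hfv : f v = 0 := eq_zero_of_forall_add_smul_mem hbdd (x := f v₀) fun s hs =>
        ⟨v₀ + s • v, by simpa [add_assoc] using hv₀.add (hv.smul hs), by simp⟩
      exact ⟨f v₀, ⟨v₀, hv₀, rfl⟩, by simp [hfv]⟩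
    · refine ⟨f (t⁻¹ • v), ⟨t⁻¹ • v, ?_, rfl⟩, by simp [ht.ne']⟩
      simpa [ht.ne'] using hv.smul (inv_nonneg.2 ht.le)
  · rintro ⟨ht, _, ⟨v, hv, rfl⟩, hy⟩
    refine ⟨(t, t • v), ⟨ht, ?_⟩, by simpa using hy⟩
    simpa [H] using hv.smul ht

theorem IsSpectrahedralShadow.convexHull_union {S T : Set F} (hS : IsSpectrahedralShadow S)
    (hT : IsSpectrahedralShadow T) (hSb : Bornology.IsBounded S) (hTb : Bornology.IsBounded T) :
    IsSpectrahedralShadow (convexHull ℝ (S ∪ T)) := by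
  rcases S.eq_empty_or_nonempty with rfl | hSne
  · simpa [hT.convex.convexHull_eq] using hT
  rcases T.eq_empty_or_nonempty with rfl | hTne
  · simpa [hS.convex.convexHull_eq] using hS
  let height : (ℝ × F) × (ℝ × F) →ₗ[ℝ] ℝ :=
    (LinearMap.fst ℝ ℝ F).coprod (LinearMap.fst ℝ ℝ F)
  let total : (ℝ × F) × (ℝ × F) →ₗ[ℝ] F :=
    (LinearMap.snd ℝ ℝ F).coprod (LinearMap.snd ℝ ℝ F)
  convert (((hS.homogenize hSne hSb).prod (hT.homogenize hTne hTb)).inter_isSpectrahedron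
    (isSpectrahedron_setOf_eq 1 height)).image total using 1
  ext x
  rw [hS.convex.convexHull_union hT.convex hSne hTne, mem_convexJoin]
  constructor
  · rintro ⟨a, ha, b, hb, s, t, hs, ht, hst, rfl⟩
    exact ⟨((s, s • a), (t, t • b)), ⟨⟨⟨hs, a, ha, rfl⟩, ht, b, hb, rfl⟩, hst⟩, by simp [total]⟩
  · rintro ⟨⟨⟨s, y⟩, t, z⟩, ⟨⟨⟨hs, a, ha, hy⟩, ht, b, hb, hz⟩, hst⟩, rfl⟩
    exact ⟨a, ha, b, hb, s, t, hs, ht, hst, congrArg₂ (· + ·) hy hz⟩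

theorem isCompact_convexJoin {A B : Set F} (hA : IsCompact A) (hB : IsCompact B) :
    IsCompact (convexJoin ℝ A B) := by
  convert (((hA.prod hB).prod (isCompact_Icc (a := (0 : ℝ)) (b := 1))).image
    (f := fun p : (F × F) × ℝ => AffineMap.lineMap p.1.1 p.1.2 p.2) (by fun_prop)) using 1
  ext x
  simp only [mem_convexJoin, segment_eq_image_lineMap, mem_image, mem_prod, Prod.exists]
  grind

theorem isCompact_convexHull_union {A B : Set F} (hA : IsCompact A) (hB : IsCompact B)
    (hAc : Convex ℝ A) (hBc : Convex ℝ B) : IsCompact (convexHull ℝ (A ∪ B)) := by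
  rcases A.eq_empty_or_nonempty with rfl | hAne
  · simpa [hBc.convexHull_eq] using hB
  rcases B.eq_empty_or_nonempty with rfl | hBne
  · simpa [hAc.convexHull_eq] using hA
  rw [hAc.convexHull_union hBc hAne hBne]
  exact isCompact_convexJoin hA hB

theorem isCompact_and_isSpectrahedralShadow_convexHull_biUnion {κ : Type*} {A : κ → Set F}
    (s : Finset κ) (hA : ∀ k ∈ s, IsCompact (A k) ∧ IsSpectrahedralShadow (A k)) :
    IsCompact (convexHull ℝ (⋃ k ∈ s, A k)) ∧
      IsSpectrahedralShadow (convexHull ℝ (⋃ k ∈ s, A k)) := by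
  classical
  induction s using Finset.induction_on with
  | empty =>
    simpa using ⟨ℝ, _, _, ∅, 0, isSpectrahedron_empty, image_empty _⟩
  | insert k s _ ih =>
    obtain ⟨hk, hs⟩ := (Finset.forall_mem_insert _ _ _).1 hA
    obtain ⟨hc, hS⟩ := ih hs
    rw [Finset.set_biUnion_insert, ← convexHull_convexHull_union_right]
    exact ⟨isCompact_convexHull_union hk.1 hc hk.2.convex hS.convex,
      hk.2.convexHull_union hS hk.1.isBounded hc.isBounded⟩

end ConvexHullUnion

section IsSDPRepresentable

variable {n : ℕ}

theorem IsSpectrahedron.isSDPRepresentable_image_fst {E : Type*} [AddCommGroup E] [Module ℝ E]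
    {Q : Set (Rn n × E)} (hQ : IsSpectrahedron Q) : IsSDPRepresentable (Prod.fst '' Q) := by
  obtain ⟨ι, _, A, B, hA, hB, rfl⟩ := hQ
  let e := Fintype.equivFin ι
  let C := B ∘ₗ LinearMap.inl ℝ (Rn n) E
  let D := B ∘ₗ LinearMap.inr ℝ (Rn n) E
  let b := Module.finBasis ℝ (LinearMap.range D)
  have hBCD (x : Rn n) (v : E) : B (x, v) = C x + D v := by simp [C, D, ← map_add]
  have hC (x : Rn n) : C x = ∑ i, x i • C (EuclideanSpace.single i 1) := by
    conv_lhs => rw [← (EuclideanSpace.basisFun (Fin n) ℝ).sum_repr x]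
    simp only [map_sum, map_smul, EuclideanSpace.basisFun_repr, EuclideanSpace.basisFun_apply]
  refine ⟨_, _, A.submatrix e.symm e.symm,
    fun i => (C (EuclideanSpace.single i 1)).submatrix e.symm e.symm,
    fun j => (b j : Matrix ι ι ℝ).submatrix e.symm e.symm, hA.submatrix _,
    fun i => (hB _).submatrix _, fun j => ?_, ?_⟩
  · obtain ⟨v, hv⟩ := (b j).2
    simpa [D, ← hv] using (hB (0, v)).submatrix e.symm
  have key (x : Rn n) (u : Fin _ → ℝ) :
      A.submatrix e.symm e.symm +
        ∑ i, x i • (C (EuclideanSpace.single i 1)).submatrix e.symm e.symm +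
        ∑ j, u j • (b j : Matrix ι ι ℝ).submatrix e.symm e.symm =
      (A + (C x + (∑ j, u j • b j : LinearMap.range D))).submatrix e.symm e.symm := by
    ext i j
    simp [hC x, Matrix.sum_apply, add_assoc]
  ext x
  simp only [mem_image, mem_ofPred_eq, Prod.exists, exists_and_right, exists_eq_right, key,
    Matrix.posSemidef_submatrix_equiv, hBCD]
  constructor
  · rintro ⟨v, hv⟩
    exact ⟨b.repr ⟨D v, v, rfl⟩, by rwa [b.sum_repr]⟩
  · rintro ⟨u, hu⟩
    obtain ⟨v, hv⟩ := (∑ j, u j • b j).2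
    exact ⟨v, by rwa [hv]⟩

theorem IsSpectrahedralShadow.isSDPRepresentable {S : Set (Rn n)}
    (hS : IsSpectrahedralShadow S) : IsSDPRepresentable S := by
  obtain ⟨E, _, _, P, f, hP, rfl⟩ := hS
  let residual (i : Fin n) : Rn n × E →ₗ[ℝ] ℝ :=
    (EuclideanSpace.proj i).toLinearMap ∘ₗ (LinearMap.fst ℝ _ E - f ∘ₗ LinearMap.snd ℝ _ E)
  have hgraph : IsSpectrahedron (⋂ i, {q | residual i q = 0}) :=
    isSpectrahedron_iInter fun i => isSpectrahedron_setOf_eq 0 (residual i)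
  have mem_graph (x : Rn n) (v : E) : (∀ i, residual i (x, v) = 0) ↔ f v = x := by
    rw [eq_comm, PiLp.ext_iff]
    simp [residual, sub_eq_zero]
  convert ((hP.preimage (LinearMap.snd ℝ (Rn n) E)).inter hgraph).isSDPRepresentable_image_fst
    using 1
  ext x
  simp [mem_graph]

end IsSDPRepresentable

section Preordering

variable {R : Type*} [CommRing R] {b : R}

/-- The preordering generated by `b`: sums `s + b * t` with `s` and `t` sums of squares, which are
nonnegative wherever `b` is. -/
def preordering (b : R) : Subsemiring R where
  carrier := {p | ∃ s t, IsSumSq s ∧ IsSumSq t ∧ s + b * t = p}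
  zero_mem' := ⟨0, 0, .zero, .zero, by ring⟩
  one_mem' := ⟨1, 0, .one, .zero, by ring⟩
  add_mem' := by
    rintro _ _ ⟨s, t, hs, ht, rfl⟩ ⟨s', t', hs', ht', rfl⟩
    exact ⟨s + s', t + t', hs.add hs', ht.add ht', by ring⟩
  mul_mem' := by
    rintro _ _ ⟨s, t, hs, ht, rfl⟩ ⟨s', t', hs', ht', rfl⟩
    exact ⟨s * s' + b * b * (t * t'), s * t' + s' * t,
      (hs.mul hs').add ((IsSumSq.mul_self b).mul (ht.mul ht')), (hs.mul ht').add (hs'.mul ht),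
      by ring⟩

theorem mem_preordering_of_isSumSq {s : R} (hs : IsSumSq s) : s ∈ preordering b :=
  ⟨s, 0, hs, .zero, by ring⟩

theorem sq_mem_preordering (a : R) : a ^ 2 ∈ preordering b :=
  mem_preordering_of_isSumSq (sq a ▸ .mul_self a)

theorem self_mem_preordering : b ∈ preordering b :=
  ⟨0, 1, .zero, .one, by ring⟩

variable [Algebra ℝ R]

theorem smul_mem_preordering {c : ℝ} (hc : 0 ≤ c) {p : R} (hp : p ∈ preordering b) :
    c • p ∈ preordering b := by
  have h : algebraMap ℝ R √c ^ 2 = algebraMap ℝ R c := by rw [← map_pow, Real.sq_sqrt hc]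
  rw [Algebra.smul_def, ← h]
  exact mul_mem (sq_mem_preordering _) hp

theorem mem_preordering_of_smul_mem {c : ℝ} (hc : 0 < c) {p : R} (hp : c • p ∈ preordering b) :
    p ∈ preordering b := by
  simpa [smul_smul, hc.ne'] using smul_mem_preordering (inv_nonneg.2 hc.le) hp

theorem algebraMap_mem_preordering {c : ℝ} (hc : 0 ≤ c) : algebraMap ℝ R c ∈ preordering b := by
  rw [Algebra.algebraMap_eq_smul_one]
  exact smul_mem_preordering hc (one_mem _)

/-- The bound `|a| ≤ c`, certified by membership of `c + a` and `c - a` in the preordering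
generated by `b`. -/
def CertifiedBound (b : R) (c : ℝ) (a : R) : Prop :=
  algebraMap ℝ R c + a ∈ preordering b ∧ algebraMap ℝ R c - a ∈ preordering b

namespace CertifiedBound

variable {a a' : R} {c c' : ℝ}

theorem algebraMap (r : ℝ) : CertifiedBound b |r| (algebraMap ℝ R r) := by
  rw [CertifiedBound, ← map_add, ← map_sub]
  exact ⟨algebraMap_mem_preordering (by linarith [neg_abs_le r]),
    algebraMap_mem_preordering (by linarith [le_abs_self r])⟩

theorem mono (h : CertifiedBound b c a) (hc : c ≤ c') : CertifiedBound b c' a := by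
  have hmem := algebraMap_mem_preordering (R := R) (b := b) (sub_nonneg.2 hc)
  rw [map_sub] at hmem
  constructor
  · convert add_mem hmem h.1 using 1; ring
  · convert add_mem hmem h.2 using 1; ring

theorem add (h : CertifiedBound b c a) (h' : CertifiedBound b c' a') :
    CertifiedBound b (c + c') (a + a') := by
  rw [CertifiedBound, map_add]
  constructor
  · convert add_mem h.1 h'.1 using 1; ring
  · convert add_mem h.2 h'.2 using 1; ring

theorem mul (h : CertifiedBound b c a) (h' : CertifiedBound b c' a') :
    CertifiedBound b (c * c') (a * a') := by
  rw [CertifiedBound, map_mul]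
  constructor <;> refine mem_preordering_of_smul_mem two_pos ?_ <;> rw [two_smul]
  · convert add_mem (mul_mem h.1 h'.1) (mul_mem h.2 h'.2) using 1; ring
  · convert add_mem (mul_mem h.2 h'.1) (mul_mem h.1 h'.2) using 1; ring

end CertifiedBound

section Ball

variable {σ : Type*} [Fintype σ] {y : σ → R} {δ : ℝ}

theorem certifiedBound_coord (hδ : 0 < δ) (y : σ → R) (k : σ) :
    CertifiedBound (algebraMap ℝ R (δ ^ 2) - ∑ i, y i ^ 2) δ (y k) := by
  classical
  generalize hb : algebraMap ℝ R (δ ^ 2) - ∑ i, y i ^ 2 = b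
  set d := algebraMap ℝ R δ with hd
  have hrest : ∑ i ∈ Finset.univ.erase k, y i ^ 2 ∈ preordering b :=
    sum_mem fun i _ => sq_mem_preordering _
  have hsum := Finset.add_sum_erase Finset.univ (fun i => y i ^ 2) (Finset.mem_univ k)
  have hb' : b = d ^ 2 - (y k ^ 2 + ∑ i ∈ Finset.univ.erase k, y i ^ 2) := by
    rw [← hb, hsum, hd, map_pow]
  have key {e : R} (he : e ^ 2 = y k ^ 2) : d + e ∈ preordering b := by
    refine mem_preordering_of_smul_mem (show 0 < 2 * δ by positivity) ?_
    convert add_mem (add_mem (sq_mem_preordering (d + e)) hrest) (self_mem_preordering (b := b))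
      using 1
    rw [Algebra.smul_def, map_mul, ← hd, map_ofNat]
    linear_combination -hb' - he
  exact ⟨key rfl, by simpa [sub_eq_add_neg] using key (neg_sq (y k))⟩

theorem exists_certifiedBound_aeval_sub (u : σ → ℝ) (p : MvPolynomial σ ℝ) :
    ∃ K, 0 ≤ K ∧ ∀ (y : σ → R) (δ : ℝ), 0 < δ → δ ≤ 1 →
      CertifiedBound (algebraMap ℝ R (δ ^ 2) - ∑ i, y i ^ 2) (K * δ)
        (aeval (fun i => algebraMap ℝ R (u i) + y i) p - algebraMap ℝ R (eval u p)) := by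
  induction p using MvPolynomial.induction_on with
  | C a =>
    refine ⟨0, le_rfl, fun y δ _ _ => ?_⟩
    simpa using CertifiedBound.algebraMap (R := R) 0
  | add p q hp hq =>
    obtain ⟨K, hK, hp⟩ := hp
    obtain ⟨K', hK', hq⟩ := hq
    refine ⟨K + K', add_nonneg hK hK', fun y δ hδ hδ1 => ?_⟩
    convert (hp y δ hδ hδ1).add (hq y δ hδ hδ1) using 1
    · ring
    · simp only [map_add]; ring
  | mul_X p k hp =>
    obtain ⟨K, hK, hp⟩ := hp
    refine ⟨K + K * |u k| + |eval u p|, by positivity, fun y δ hδ hδ1 => ?_⟩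
    have hpδ := hp y δ hδ hδ1
    have hy := certifiedBound_coord hδ y k
    convert (((hpδ.mul hy).mono (c' := K * δ) (by nlinarith [mul_nonneg hK hδ.le])).add
      (hpδ.mul (.algebraMap (u k)))).add ((CertifiedBound.algebraMap (eval u p)).mul hy) using 1
    · ring
    · simp only [map_mul, aeval_X, eval_X]; ring

end Ball

section QuadraticForm

open Matrix

variable {σ : Type*} [Fintype σ] {ι : Type*} [Fintype ι]

theorem isSumSq_dotProduct_sum_vecMulVec_mulVec {R : Type*} [CommRing R] (W : ι → σ → R)
    (z : σ → R) : IsSumSq (z ⬝ᵥ (∑ l, vecMulVec (W l) (W l)) *ᵥ z) := by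
  have : z ⬝ᵥ (∑ l, vecMulVec (W l) (W l)) *ᵥ z = ∑ l, (z ⬝ᵥ W l) ^ 2 := by
    simp only [sum_mulVec, dotProduct_sum, vecMulVec_mulVec, sq]
    refine Finset.sum_congr rfl fun l _ => ?_
    simp [dotProduct_comm (W l) z]
  rw [this]
  exact .sum_sq _ _

theorem isSumSq_dotProduct_map_mulVec {A : Matrix σ σ ℝ} (hA : A.PosSemidef) (z : σ → R) :
    IsSumSq (z ⬝ᵥ A.map (algebraMap ℝ R) *ᵥ z) := by
  obtain ⟨m, v, rfl⟩ := Matrix.posSemidef_iff_eq_sum_vecMulVec.1 hA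
  convert isSumSq_dotProduct_sum_vecMulVec_mulVec (fun l i => algebraMap ℝ R (v l i)) z using 4
  ext i j
  simp [Matrix.sum_apply, vecMulVec_apply]

theorem smul_sum_sq_add_dotProduct_mulVec_mem_preordering {c : ℝ} {E : Matrix σ σ R}
    (hE : ∀ i j, CertifiedBound b c (E i j)) (z : σ → R) :
    (Fintype.card σ * c) • ∑ i, z i ^ 2 + z ⬝ᵥ E *ᵥ z ∈ preordering b := by
  have hterm (i j : σ) :
      (2 * c) • (z i ^ 2 + z j ^ 2) + 4 * (z i * (E i j * z j)) ∈ preordering b := by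
    convert add_mem (mul_mem (sq_mem_preordering (z i + z j)) (hE i j).1)
      (mul_mem (sq_mem_preordering (z i - z j)) (hE i j).2) using 1
    rw [Algebra.smul_def, map_mul, map_ofNat]
    ring
  refine mem_preordering_of_smul_mem four_pos ?_
  convert sum_mem fun i (_ : i ∈ Finset.univ) => sum_mem fun j (_ : j ∈ Finset.univ) => hterm i j
    using 1
  simp only [dotProduct, mulVec, Finset.sum_add_distrib, ← Finset.mul_sum, ← Finset.smul_sum,
    Finset.sum_const, Finset.card_univ, nsmul_eq_mul]
  simp only [Algebra.smul_def, map_mul, map_ofNat, map_natCast]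
  ring

theorem dotProduct_mulVec_mem_preordering [DecidableEq σ] {A : Matrix σ σ ℝ} {c μ : ℝ}
    (hA : (A - μ • 1).PosSemidef) (hc : Fintype.card σ * c ≤ μ) {H : Matrix σ σ R}
    (hH : ∀ i j, CertifiedBound b c (H i j - algebraMap ℝ R (A i j))) (z : σ → R) :
    z ⬝ᵥ H *ᵥ z ∈ preordering b := by
  have hsq : z ⬝ᵥ ((1 : Matrix σ σ R) *ᵥ z) = ∑ i, z i ^ 2 := by simp [dotProduct, sq]
  have hmain := mem_preordering_of_isSumSq (b := b) (isSumSq_dotProduct_map_mulVec hA z)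
  have hpert := smul_sum_sq_add_dotProduct_mulVec_mem_preordering
    (E := H - A.map (algebraMap ℝ R)) hH z
  have hslack : (μ - Fintype.card σ * c) • ∑ i, z i ^ 2 ∈ preordering b :=
    smul_mem_preordering (sub_nonneg.2 hc) (sum_mem fun i _ => sq_mem_preordering _)
  convert add_mem (add_mem hmain hpert) hslack using 1
  have : (A - μ • 1).map (algebraMap ℝ R) = A.map (algebraMap ℝ R) - μ • 1 := by
    ext i j
    by_cases hij : i = j <;> simp [hij, Algebra.algebraMap_eq_smul_one, sub_smul]
  rw [this, sub_mulVec, sub_mulVec, dotProduct_sub, dotProduct_sub, smul_mulVec, dotProduct_smul,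
    hsq]
  module

end QuadraticForm

end Preordering

section Finsler

open Matrix

/-- Finsler's lemma. The open sets on which `A + M • B` is positive exhaust the compact unit
sphere as `M` grows. -/
theorem exists_posDef_add_smul {σ : Type*} [Fintype σ] {A B : Matrix σ σ ℝ} (hA : A.IsSymm)
    (hB : B.PosSemidef) (h : ∀ v ≠ 0, v ⬝ᵥ B *ᵥ v = 0 → 0 < v ⬝ᵥ A *ᵥ v) :
    ∃ M : ℕ, (A + (M : ℝ) • B).PosDef := by
  have hB0 (v : σ → ℝ) : 0 ≤ v ⬝ᵥ B *ᵥ v := hB.dotProduct_mulVec_nonneg v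
  have hform (M : ℕ) (v : σ → ℝ) :
      v ⬝ᵥ (A + (M : ℝ) • B) *ᵥ v = v ⬝ᵥ A *ᵥ v + M * (v ⬝ᵥ B *ᵥ v) := by
    rw [add_mulVec, dotProduct_add, smul_mulVec, dotProduct_smul, smul_eq_mul]
  let U (M : ℕ) : Set (σ → ℝ) := {v | 0 < v ⬝ᵥ (A + (M : ℝ) • B) *ᵥ v}
  have hU_open (M : ℕ) : IsOpen (U M) := isOpen_lt continuous_const (by fun_prop)
  have hU_mono : Monotone U := by
    intro M N hMN v hv
    simp only [U, mem_ofPred_eq, hform] at hv ⊢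
    exact hv.trans_le (by gcongr; exact hB0 v)
  have hU_cover : sphere (0 : σ → ℝ) 1 ⊆ ⋃ M, U M := fun v hv => by
    have hv0 : v ≠ 0 := ne_zero_of_mem_unit_sphere ⟨v, hv⟩
    simp only [U, mem_iUnion, mem_ofPred_eq, hform]
    rcases (hB0 v).eq_or_lt' with hBv | hBv
    · exact ⟨0, by simpa using h v hv0 hBv⟩
    · obtain ⟨M, hM⟩ := exists_nat_gt (-(v ⬝ᵥ A *ᵥ v) / (v ⬝ᵥ B *ᵥ v))
      exact ⟨M, by linarith [(div_lt_iff₀ hBv).1 hM]⟩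
  obtain ⟨M, hM⟩ := (isCompact_sphere (0 : σ → ℝ) 1).elim_directed_cover U hU_open hU_cover
    hU_mono.directed_le
  refine ⟨M, .of_dotProduct_mulVec_pos ((Matrix.isHermitian_iff_isSymm.2 hA).add
    (hB.1.smul (.all _))) fun v hv => ?_⟩
  have hnorm : 0 < ‖v‖ := norm_pos_iff.2 hv
  have hpos : 0 < (‖v‖⁻¹ • v) ⬝ᵥ (A + (M : ℝ) • B) *ᵥ (‖v‖⁻¹ • v) :=
    hM (by simp [norm_smul, hnorm.ne'])
  rw [mulVec_smul, dotProduct_smul, smul_dotProduct, smul_smul, smul_eq_mul] at hpos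
  exact pos_of_mul_pos_right hpos (by positivity)

theorem exists_posSemidef_sub_smul_one {σ : Type*} [Finite σ] [DecidableEq σ] {A : Matrix σ σ ℝ}
    (hA : A.PosDef) : ∃ μ : ℝ, 0 < μ ∧ (A - μ • (1 : Matrix σ σ ℝ)).PosSemidef := by
  cases nonempty_fintype σ
  obtain ⟨M, hM⟩ := exists_posDef_add_smul (A := -1) (Matrix.isSymm_one.neg) hA.posSemidef
    fun v hv hAv => absurd hAv (hA.dotProduct_mulVec_pos hv).ne'
  refine ⟨((M : ℝ) + 1)⁻¹, by positivity, ?_⟩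
  convert (hM.posSemidef.add hA.posSemidef).smul (inv_nonneg.2 (by positivity : 0 ≤ (M : ℝ) + 1))
    using 1
  have : A = ((M : ℝ) + 1)⁻¹ • ((M : ℝ) + 1) • A := (inv_smul_smul₀ (by positivity) A).symm
  rw [sub_eq_iff_eq_add]
  conv_lhs => rw [this]
  module

end Finsler

section ConcavityCertificate

open Matrix

section Hessian

variable {σ R : Type*} [CommRing R]

theorem pderiv_pderiv_comm (i j : σ) (g : MvPolynomial σ R) :
    pderiv i (pderiv j g) = pderiv j (pderiv i g) := by
  classical
  have : ⁅pderiv (R := R) i, pderiv j⁆ = 0 :=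
    derivation_ext fun k => by
      rw [Derivation.commutator_apply]
      simp [pderiv_X, Pi.single_apply, apply_ite]
  exact sub_eq_zero.1 (by rw [← Derivation.commutator_apply, this, Derivation.zero_apply])

/-- The Hessian of a polynomial as a matrix of polynomials. -/
def polyHessian (g : MvPolynomial σ R) : Matrix σ σ (MvPolynomial σ R) :=
  Matrix.of fun i j => pderiv i (pderiv j g)

variable {S : Type*} [CommRing S] [Algebra ℝ R] [Algebra ℝ S]

/-- The Hessian form `zᵀ ∇²g(w) z`, evaluated in an arbitrary `ℝ`-algebra. -/
def hessianForm [Fintype σ] (g : MvPolynomial σ ℝ) (w z : σ → R) : R :=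
  z ⬝ᵥ (polyHessian g).map (aeval w) *ᵥ z

theorem map_hessianForm [Fintype σ] (φ : R →ₐ[ℝ] S) (g : MvPolynomial σ ℝ) (w z : σ → R) :
    φ (hessianForm g w z) = hessianForm g (φ ∘ w) (φ ∘ z) := by
  simp [hessianForm, dotProduct, mulVec, Function.comp_def, comp_aeval_apply]

end Hessian

variable {n : ℕ}

theorem aeval_ballPoly {R : Type*} [CommRing R] [Algebra ℝ R] (u : Rn n) (δ : ℝ) (w : Fin n → R) :
    aeval w (ballPoly u δ) = algebraMap ℝ R (δ ^ 2) - ∑ i, (w i - algebraMap ℝ R (u i)) ^ 2 := by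
  simp [ballPoly]

/-- A certificate for the concavity of `g` on `closedBall u δ`: in variables `z = X ∘ inl` and
`w = X ∘ inr`, the form `-zᵀ ∇²g(w) z` lies in the preordering of the ball `‖w - u‖ ≤ δ`. -/
def HasConcavityCertificate (g : MvPolynomial (Fin n) ℝ) (u : Rn n) (δ : ℝ) : Prop :=
  -hessianForm g (fun i => X (Sum.inr i)) (fun i => X (Sum.inl i)) ∈
    preordering (aeval (fun i => X (Sum.inr i)) (ballPoly u δ) :
      MvPolynomial (Fin n ⊕ Fin n) ℝ)

theorem SosConcave.hasConcavityCertificate {g : MvPolynomial (Fin n) ℝ} (hg : SosConcave g)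
    (u : Rn n) (δ : ℝ) : HasConcavityCertificate g u δ := by
  obtain ⟨k, W, hW⟩ := hg
  refine mem_preordering_of_isSumSq ?_
  convert isSumSq_dotProduct_sum_vecMulVec_mulVec
    (fun l i => aeval (fun i => X (Sum.inr i)) (W l i))
    (fun i => (X (Sum.inl i) : MvPolynomial (Fin n ⊕ Fin n) ℝ)) using 1
  rw [hessianForm, ← dotProduct_neg, ← neg_mulVec]
  congr 2
  ext1 i j
  simpa [polyHessian, Matrix.sum_apply, vecMulVec_apply] using
    congrArg (aeval fun i => (X (Sum.inr i) : MvPolynomial (Fin n ⊕ Fin n) ℝ)) (hW i j)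

theorem eventually_hasConcavityCertificate {g : MvPolynomial (Fin n) ℝ} {u : Rn n}
    (hg : (-phess g u).PosDef) : ∀ᶠ δ in nhdsWithin 0 (Ioi 0), HasConcavityCertificate g u δ := by
  obtain ⟨μ, hμ, hμA⟩ := exists_posSemidef_sub_smul_one hg
  choose K _ hK using fun ij : Fin n × Fin n =>
    exists_certifiedBound_aeval_sub (R := MvPolynomial (Fin n ⊕ Fin n) ℝ) u
      (-polyHessian g ij.1 ij.2)
  obtain ⟨M, hM⟩ := Finite.exists_le K
  have hlim : Tendsto (fun δ : ℝ => n * (|M| * δ)) (nhdsWithin 0 (Ioi 0)) (nhds 0) :=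
    ((by fun_prop : Continuous fun δ : ℝ => n * (|M| * δ)).tendsto' 0 0 (by simp)).mono_left
      nhdsWithin_le_nhds
  filter_upwards [self_mem_nhdsWithin, hlim.eventually_le_const hμ,
    nhdsWithin_le_nhds (eventually_le_nhds one_pos)] with δ hδ hδμ hδ1
  rw [HasConcavityCertificate, aeval_ballPoly, hessianForm, ← dotProduct_neg, ← neg_mulVec]
  refine dotProduct_mulVec_mem_preordering hμA (c := |M| * δ) (by simpa using hδμ) (fun i j => ?_) _
  convert (hK (i, j) (fun k => X (Sum.inr k) - C (u k)) δ hδ hδ1).mono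
    (mul_le_mul_of_nonneg_right ((hM (i, j)).trans (le_abs_self M)) (mem_Ioi.1 hδ).le) using 1
  · simp
  · simp [polyHessian, phess]

theorem StrictlyQuasiConcaveAt.exists_posDef {f : MvPolynomial (Fin n) ℝ} {u : Rn n}
    (hf : StrictlyQuasiConcaveAt f u) :
    ∃ M : ℕ, (-phess f u + (M : ℝ) • vecMulVec (pgrad f u) (pgrad f u)).PosDef := by
  have hsymm : (phess f u).IsSymm := by
    ext i j
    simp [phess, pderiv_pderiv_comm]
  refine exists_posDef_add_smul hsymm.neg (posSemidef_vecMulVec_self_star _) fun v hv hGv => ?_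
  have hGv : pgrad f u ⬝ᵥ v = 0 := by simpa [vecMulVec_mulVec, dotProduct_comm v] using hGv
  rcases hf with ⟨-, hf⟩ | ⟨-, hf⟩
  · simpa [dotProduct, mulVec, Finset.mul_sum, mul_assoc] using hf v hv hGv
  · exact hf.dotProduct_mulVec_pos hv

theorem phess_sub_C_mul_sq {f : MvPolynomial (Fin n) ℝ} {u : Rn n} (hf : peval f u = 0) (c : ℝ) :
    phess (f - C c * f ^ 2) u = phess f u - (2 * c) • vecMulVec (pgrad f u) (pgrad f u) := by
  rw [peval] at hf
  ext i j
  simp [phess, pgrad, vecMulVec_apply, Derivation.leibniz, Derivation.leibniz_pow, hf]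
  ring

/-- Where `f` vanishes, subtracting a multiple of `f²` turns strict quasi-concavity into negative
definiteness of the Hessian, without changing the sign of `f` nearby. -/
theorem exists_eventually_hasConcavityCertificate {f : MvPolynomial (Fin n) ℝ} {u : Rn n}
    (hfu : 0 ≤ peval f u) (h : peval f u = 0 → SosConcave f ∨ StrictlyQuasiConcaveAt f u) :
    ∃ g : MvPolynomial (Fin n) ℝ, ∀ᶠ δ in nhdsWithin 0 (Ioi 0), HasConcavityCertificate g u δ ∧
      ∀ x ∈ closedBall u δ, 0 ≤ peval g x ↔ 0 ≤ peval f x := by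
  have hcont : Continuous (peval f) := f.continuous_eval.comp (PiLp.continuous_ofLp 2 _)
  have hball {s : Set (Rn n)} (hs : s ∈ nhds u) :
      ∀ᶠ δ in nhdsWithin 0 (Ioi 0), closedBall u δ ⊆ s :=
    nhdsWithin_le_nhds (eventually_closedBall_subset hs)
  rcases hfu.eq_or_lt' with hfu | hfu
  · rcases h hfu with hsos | hstrict
    · exact ⟨f, .of_forall fun δ => ⟨hsos.hasConcavityCertificate u δ, fun _ _ => Iff.rfl⟩⟩
    · obtain ⟨M, hM⟩ := hstrict.exists_posDef
      refine ⟨f - C (M / 2 : ℝ) * f ^ 2, (eventually_hasConcavityCertificate ?_).and ?_⟩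
      · rw [phess_sub_C_mul_sq hfu]
        convert hM using 1
        module
      · have hpos : ∀ᶠ x in nhds u, 0 < 1 - M / 2 * peval f x :=
          continuousAt_const.eventually_lt (by fun_prop) (by simp [hfu])
        filter_upwards [hball hpos] with δ hδ x hx
        rw [show peval (f - C (M / 2 : ℝ) * f ^ 2) x = peval f x * (1 - M / 2 * peval f x) by
          simp [peval]; ring]
        exact mul_nonneg_iff_of_pos_right (hδ hx)
  · have hsos : SosConcave (1 : MvPolynomial (Fin n) ℝ) := ⟨0, Fin.elim0, by simp⟩
    refine ⟨1, ?_⟩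
    filter_upwards [hball (hcont.continuousAt.eventually_const_lt hfu)] with δ hδ
    exact ⟨hsos.hasConcavityCertificate u δ, fun x hx =>
      iff_of_true (by simp [peval]) (hδ hx).le⟩

end ConcavityCertificate

section MomentFunctional

open Matrix

theorem isSpectrahedron_setOf_forall_bilinForm_nonneg {E W : Type*} [AddCommGroup E] [Module ℝ E]
    [AddCommGroup W] [Module ℝ W] [FiniteDimensional ℝ W]
    (B : E →ₗ[ℝ] LinearMap.BilinForm ℝ W) (hB : ∀ v p q, B v p q = B v q p) :
    IsSpectrahedron {v | ∀ p, 0 ≤ B v p p} := by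
  let b := Module.finBasis ℝ W
  have hsymm (v : E) : (LinearMap.BilinForm.toMatrix b (B v)).IsSymm := by
    ext i j
    simp [LinearMap.BilinForm.toMatrix_apply, hB v]
  convert isSpectrahedron_setOf_posSemidef
    ((LinearMap.BilinForm.toMatrix b).toLinearMap ∘ₗ B) hsymm using 2
  ext v
  constructor
  · refine fun hv => .of_dotProduct_mulVec_nonneg (isHermitian_iff_isSymm.2 (hsymm v)) fun c => ?_
    simpa [LinearMap.BilinForm.dotProduct_toMatrix_mulVec] using hv (b.equivFun.symm c)
  · intro hv p
    rw [LinearMap.BilinForm.apply_eq_dotProduct_toMatrix_mulVec b]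
    exact hv.dotProduct_mulVec_nonneg (b.repr p)

variable {σ : Type*} {q : MvPolynomial σ ℝ} {L : Module.Dual ℝ (MvPolynomial σ ℝ)} {D : ℕ}

/-- Positive semidefiniteness of the order-`D` localizing matrix of `q` for the functional `L`; for
`q = 1` this is the moment matrix. -/
def LocalizingNonneg (q : MvPolynomial σ ℝ) (D : ℕ) (L : Module.Dual ℝ (MvPolynomial σ ℝ)) : Prop :=
  ∀ p : MvPolynomial σ ℝ, p.totalDegree ≤ D → 0 ≤ L (q * p ^ 2)

theorem isSpectrahedron_setOf_localizingNonneg [Finite σ] (q : MvPolynomial σ ℝ) (D : ℕ) :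
    IsSpectrahedron {L | LocalizingNonneg q D L} := by
  let W := restrictTotalDegree σ ℝ D
  let B : Module.Dual ℝ (MvPolynomial σ ℝ) →ₗ[ℝ] LinearMap.BilinForm ℝ W :=
    { toFun := fun L =>
        ((LinearMap.mul ℝ _).compr₂ (L ∘ₗ LinearMap.mulLeft ℝ q)).domRestrict₁₂ W W
      map_add' := fun L L' => rfl
      map_smul' := fun c L => rfl }
  have hB (L : Module.Dual ℝ (MvPolynomial σ ℝ)) (p p' : W) : B L p p' = L (q * (p * p')) := rfl
  convert isSpectrahedron_setOf_forall_bilinForm_nonneg B (fun L p p' => ?_) using 2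
  · ext L
    simp [LocalizingNonneg, hB, W, mem_restrictTotalDegree, sq]
  · rw [hB, hB, mul_comm (p : MvPolynomial σ ℝ)]

namespace LocalizingNonneg

theorem mono (h : LocalizingNonneg q D L) {D' : ℕ} (hD : D' ≤ D) : LocalizingNonneg q D' L :=
  fun p hp => h p (hp.trans hD)

theorem sq_mul {d : ℕ} (h : LocalizingNonneg q (D + d) L) {r : MvPolynomial σ ℝ}
    (hr : r.totalDegree ≤ d) : LocalizingNonneg (r ^ 2 * q) D L := by
  intro p hp
  convert h (p * r) ((totalDegree_mul _ _).trans (add_le_add hp hr)) using 2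
  ring

end LocalizingNonneg

variable {τ : Type*}

theorem exists_totalDegree_aeval_le (p : MvPolynomial τ ℝ) :
    ∃ D, ∀ y : τ → MvPolynomial σ ℝ, (∀ k, (y k).totalDegree ≤ 1) →
      (aeval y p).totalDegree ≤ D := by
  induction p using MvPolynomial.induction_on with
  | C a => exact ⟨0, by simp⟩
  | add p q hp hq =>
    obtain ⟨D, hD⟩ := hp
    obtain ⟨D', hD'⟩ := hq
    refine ⟨max D D', fun y hy => ?_⟩
    rw [map_add]
    exact (totalDegree_add _ _).trans (max_le_max (hD y hy) (hD' y hy))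
  | mul_X p k hp =>
    obtain ⟨D, hD⟩ := hp
    refine ⟨D + 1, fun y hy => ?_⟩
    rw [map_mul, aeval_X]
    exact (totalDegree_mul _ _).trans (add_le_add (hD y hy) (hy k))

theorem exists_localizingNonneg_imp_map_mul_aeval_nonneg {t : MvPolynomial τ ℝ}
    (ht : IsSumSq t) :
    ∃ D, ∀ (q : MvPolynomial σ ℝ) (L : Module.Dual ℝ (MvPolynomial σ ℝ))
      (y : τ → MvPolynomial σ ℝ), LocalizingNonneg q D L → (∀ k, (y k).totalDegree ≤ 1) →
      0 ≤ L (q * aeval y t) := by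
  induction ht with
  | zero => exact ⟨0, by simp⟩
  | sq_add a _ ih =>
    obtain ⟨D, hD⟩ := exists_totalDegree_aeval_le (σ := σ) a
    obtain ⟨D', hD'⟩ := ih
    refine ⟨max D D', fun q L y hL hy => ?_⟩
    rw [map_add (aeval y), map_mul (aeval y), ← sq, mul_add, map_add]
    exact add_nonneg (hL _ ((hD y hy).trans (le_max_left _ _)))
      (hD' q L y (hL.mono (le_max_right _ _)) hy)

end MomentFunctional

section Jensen

variable {σ R : Type*} [Fintype σ] [CommRing R] [Algebra ℝ R]

theorem hasDerivAt_map_mul_aeval_add_smul (L : Module.Dual ℝ R) (a z : σ → R)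
    (p : MvPolynomial σ ℝ) (q : R) (s : ℝ) :
    HasDerivAt (fun s : ℝ => L (q * aeval (a + s • z) p))
      (L (q * ∑ i, z i * aeval (a + s • z) (pderiv i p))) s := by
  classical
  induction p using MvPolynomial.induction_on generalizing q with
  | C c => simpa using hasDerivAt_const s _
  | add p₁ p₂ h₁ h₂ =>
    simpa only [map_add, mul_add, Finset.sum_add_distrib] using (h₁ q).fun_add (h₂ q)
  | mul_X p k ih =>
    refine (((ih (q * a k)).fun_add ((hasDerivAt_id' s).fun_mul (ih (q * z k)))).congr_deriv
      ?_).congr_of_eventuallyEq (.of_forall fun t => ?_)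
    · have hsum : ∑ i, z i * aeval (a + s • z) (pderiv i (p * X k)) =
          (∑ i, z i * aeval (a + s • z) (pderiv i p)) * (a k + s • z k) +
            z k * aeval (a + s • z) p := by
        simp only [pderiv_mul, pderiv_X, map_add, map_mul, aeval_X, mul_add, ← mul_assoc,
          Finset.sum_add_distrib, ← Finset.sum_mul]
        simp [Pi.single_apply, apply_ite, mul_add]
      rw [hsum, one_mul, ← smul_eq_mul s, ← map_smul, ← map_add, ← map_add]
      congr 1
      simp only [Algebra.smul_def]
      ring
    · beta_reduce
      rw [map_mul (aeval _), aeval_X, Pi.add_apply, Pi.smul_apply, ← smul_eq_mul t, ← map_smul,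
        ← map_add]
      congr 1
      simp only [Algebra.smul_def]
      ring

theorem le_of_hasDerivAt_of_hasDerivAt_nonpos {φ φ' φ'' : ℝ → ℝ}
    (hφ : ∀ s, HasDerivAt φ (φ' s) s) (hφ' : ∀ s, HasDerivAt φ' (φ'' s) s) (h0 : φ' 0 = 0)
    (hneg : ∀ s ∈ Icc 0 1, φ'' s ≤ 0) : φ 1 ≤ φ 0 := by
  have anti {f f' : ℝ → ℝ} (hf : ∀ s, HasDerivAt f (f' s) s) (hneg : ∀ s ∈ Icc 0 1, f' s ≤ 0) :
      AntitoneOn f (Icc 0 1) :=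
    antitoneOn_of_hasDerivWithinAt_nonpos (convex_Icc 0 1)
      (fun s _ => (hf s).continuousAt.continuousWithinAt) (fun s _ => (hf s).hasDerivWithinAt)
      fun s hs => hneg s (interior_subset hs)
  have hφ'_nonpos : ∀ s ∈ Icc 0 1, φ' s ≤ 0 := fun s hs =>
    (anti hφ' hneg (left_mem_Icc.2 zero_le_one) hs hs.1).trans_eq h0
  exact anti hφ hφ'_nonpos (left_mem_Icc.2 zero_le_one) (right_mem_Icc.2 zero_le_one) zero_le_one

/-- Jensen's inequality for a linear functional that need not come from a measure: concavity is
only required in the mean, along the segments issuing from the mean. -/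
theorem map_aeval_le_eval (L : Module.Dual ℝ R) (hL : L 1 = 1) {x : σ → ℝ} {y : σ → R}
    (hy : ∀ i, L (y i) = x i) {g : MvPolynomial σ ℝ}
    (hneg : ∀ s ∈ Icc (0 : ℝ) 1, L (hessianForm g
      (algebraMap ℝ R ∘ x + s • (y - algebraMap ℝ R ∘ x)) (y - algebraMap ℝ R ∘ x)) ≤ 0) :
    L (aeval y g) ≤ eval x g := by
  have hconst (c : ℝ) : L (algebraMap ℝ R c) = c := by simp [Algebra.algebraMap_eq_smul_one, hL]
  have hconst_eval (p : MvPolynomial σ ℝ) :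
      aeval (algebraMap ℝ R ∘ x) p = algebraMap ℝ R (eval x p) := by
    simpa [Function.comp_def] using aeval_algebraMap_apply R x p
  generalize hz : y - algebraMap ℝ R ∘ x = z at hneg
  have hy' : y = algebraMap ℝ R ∘ x + z := by rw [← hz]; abel
  have hLz (i : σ) : L (z i) = 0 := by simp [← hz, hy, hconst]
  let a := algebraMap ℝ R ∘ x
  let w (s : ℝ) := a + s • z
  have hφ (s : ℝ) : HasDerivAt (fun s => L (aeval (w s) g))
      (∑ i, L (z i * aeval (w s) (pderiv i g))) s := by
    simpa only [one_mul, map_sum] using hasDerivAt_map_mul_aeval_add_smul L a z g 1 s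
  have hφ' (s : ℝ) : HasDerivAt (fun s => ∑ i, L (z i * aeval (w s) (pderiv i g)))
      (L (hessianForm g (w s) z)) s := by
    refine (HasDerivAt.fun_sum fun i _ =>
      hasDerivAt_map_mul_aeval_add_smul L a z (pderiv i g) (z i) s).congr_deriv ?_
    rw [hessianForm, dotProduct, map_sum]
    refine Finset.sum_congr rfl fun i _ => ?_
    simp [Matrix.mulVec, dotProduct, polyHessian, w, mul_comm, pderiv_pderiv_comm i]
  have hφ'0 : ∑ i, L (z i * aeval (w 0) (pderiv i g)) = 0 := by
    refine Finset.sum_eq_zero fun i _ => ?_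
    rw [mul_comm, show w 0 = a by simp [w], hconst_eval, ← Algebra.smul_def, map_smul, hLz,
      smul_zero]
  have := le_of_hasDerivAt_of_hasDerivAt_nonpos hφ hφ' hφ'0 hneg
  simpa [w, a, hy', hconst_eval, hconst] using this

end Jensen

section MomentRelaxation

variable {n : ℕ}

namespace LocalizingNonneg

variable {σ : Type*} {q q' : MvPolynomial σ ℝ} {L : Module.Dual ℝ (MvPolynomial σ ℝ)} {D : ℕ}

theorem add (h : LocalizingNonneg q D L) (h' : LocalizingNonneg q' D L) :
    LocalizingNonneg (q + q') D L := fun p hp => by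
  rw [add_mul, map_add]
  exact add_nonneg (h p hp) (h' p hp)

theorem smul (h : LocalizingNonneg q D L) {c : ℝ} (hc : 0 ≤ c) : LocalizingNonneg (c • q) D L :=
  fun p hp => by
    rw [smul_mul_assoc, map_smul]
    exact smul_nonneg hc (h p hp)

theorem sum {ι : Type*} {s : Finset ι} {q : ι → MvPolynomial σ ℝ}
    (h : ∀ i ∈ s, LocalizingNonneg (q i) D L) : LocalizingNonneg (∑ i ∈ s, q i) D L :=
  fun p hp => by
    rw [Finset.sum_mul, map_sum]
    exact Finset.sum_nonneg fun i hi => h i hi p hp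

end LocalizingNonneg

theorem peval_ballPoly (u x : Rn n) (δ : ℝ) :
    peval (ballPoly u δ) x = δ ^ 2 - ∑ i, (x i - u i) ^ 2 := by
  simp [peval, ballPoly]

theorem peval_ballPoly_nonneg_iff {u x : Rn n} {δ : ℝ} (hδ : 0 ≤ δ) :
    0 ≤ peval (ballPoly u δ) x ↔ x ∈ closedBall u δ := by
  rw [peval_ballPoly, sub_nonneg, mem_closedBall, EuclideanSpace.dist_eq,
    Real.sqrt_le_left hδ]
  simp only [Real.dist_eq, sq_abs]

/-- The generic deviation `z = X - x` from a point `x`. -/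
def deviation (x : Rn n) : Fin n → MvPolynomial (Fin n) ℝ :=
  X - algebraMap ℝ _ ∘ x

/-- The segment `x + s (X - x)` from a point `x` to the generic point `X`. -/
def genericSegment (x : Rn n) (s : ℝ) : Fin n → MvPolynomial (Fin n) ℝ :=
  algebraMap ℝ _ ∘ x + s • deviation x

theorem totalDegree_deviation_le (x : Rn n) (k : Fin n) : (deviation x k).totalDegree ≤ 1 := by
  simpa [deviation] using totalDegree_sub_C_le (X k : MvPolynomial (Fin n) ℝ) (x k)

theorem totalDegree_genericSegment_le (x : Rn n) (s : ℝ) (k : Fin n) :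
    (genericSegment x s k).totalDegree ≤ 1 :=
  (totalDegree_add _ _).trans
    (max_le (by simp) ((totalDegree_smul_le _ _).trans (totalDegree_deviation_le x k)))

theorem aeval_genericSegment_ballPoly (u x : Rn n) (δ s : ℝ) :
    aeval (genericSegment x s) (ballPoly u δ) =
      ((1 - s) * peval (ballPoly u δ) x) • 1 + s • ballPoly u δ +
        (s * (1 - s)) • ∑ i, deviation x i ^ 2 * 1 := by
  have hcoord (i : Fin n) : (genericSegment x s i - C (u i)) ^ 2 =
      C (1 - s) * C ((x i - u i) ^ 2) + C s * (X i - C (u i)) ^ 2 -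
        C (s * (1 - s)) * deviation x i ^ 2 := by
    simp only [genericSegment, deviation, Pi.add_apply, Pi.sub_apply, Pi.smul_apply,
      Function.comp_apply, algebraMap_eq, smul_eq_C_mul, map_sub, map_mul, map_pow, map_one]
    ring
  rw [aeval_ballPoly, peval_ballPoly, ballPoly]
  simp only [algebraMap_eq, hcoord, Finset.sum_add_distrib, Finset.sum_sub_distrib,
    ← Finset.mul_sum, smul_eq_C_mul, mul_one, map_sub, map_mul, map_pow, map_one, map_sum]
  ring

variable {u : Rn n} {δ : ℝ} {D : ℕ} {L : Module.Dual ℝ (MvPolynomial (Fin n) ℝ)}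

theorem LocalizingNonneg.aeval_genericSegment_ballPoly (hL : LocalizingNonneg 1 (D + 1) L)
    (hball : LocalizingNonneg (ballPoly u δ) D L) {x : Rn n} (hx : 0 ≤ peval (ballPoly u δ) x)
    {s : ℝ} (hs : s ∈ Icc (0 : ℝ) 1) :
    LocalizingNonneg (aeval (genericSegment x s) (ballPoly u δ)) D L := by
  have hs1 : 0 ≤ 1 - s := sub_nonneg.2 hs.2
  rw [_root_.aeval_genericSegment_ballPoly]
  exact (((hL.mono D.le_succ).smul (mul_nonneg hs1 hx)).add (hball.smul hs.1)).add
    (.smul (.sum fun i _ => hL.sq_mul (totalDegree_deviation_le x i)) (mul_nonneg hs.1 hs1))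

theorem HasConcavityCertificate.exists_neg_hessianForm_eq {g : MvPolynomial (Fin n) ℝ}
    (hg : HasConcavityCertificate g u δ) :
    ∃ a t : MvPolynomial (Fin n ⊕ Fin n) ℝ, IsSumSq a ∧ IsSumSq t ∧
      ∀ {R : Type} [CommRing R] [Algebra ℝ R] (w z : Fin n → R), -hessianForm g w z =
        1 * aeval (Sum.elim z w) a + aeval w (ballPoly u δ) * aeval (Sum.elim z w) t := by
  obtain ⟨a, t, ha, ht, hat⟩ := hg
  refine ⟨a, t, ha, ht, fun w z => ?_⟩
  have hz : (aeval (R := ℝ) (Sum.elim z w) ∘ fun i => X (Sum.inl i)) = z := by ext i; simp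
  have hw : (aeval (R := ℝ) (Sum.elim z w) ∘ fun i => X (Sum.inr i)) = w := by ext i; simp
  have := congrArg (aeval (Sum.elim z w)) hat
  rw [map_neg, map_hessianForm, hz, hw, map_add, map_mul, comp_aeval_apply] at this
  rw [one_mul, ← this]
  simp

theorem HasConcavityCertificate.exists_localizingNonneg_imp_map_hessianForm_nonpos
    {g : MvPolynomial (Fin n) ℝ} (hg : HasConcavityCertificate g u δ) :
    ∃ D, ∀ L x s, LocalizingNonneg 1 D L → LocalizingNonneg (ballPoly u δ) D L →
      0 ≤ peval (ballPoly u δ) x → s ∈ Icc (0 : ℝ) 1 →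
        L (hessianForm g (genericSegment x s) (deviation x)) ≤ 0 := by
  obtain ⟨a, t, ha, ht, hat⟩ := hg.exists_neg_hessianForm_eq
  obtain ⟨D, hD⟩ := exists_localizingNonneg_imp_map_mul_aeval_nonneg (σ := Fin n) ha
  obtain ⟨D', hD'⟩ := exists_localizingNonneg_imp_map_mul_aeval_nonneg (σ := Fin n) ht
  refine ⟨max D (D' + 1), fun L x s hL hball hx hs => ?_⟩
  have hdeg (k : Fin n ⊕ Fin n) :
      (Sum.elim (deviation x) (genericSegment x s) k).totalDegree ≤ 1 := by
    rcases k with k | k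
    exacts [totalDegree_deviation_le x k, totalDegree_genericSegment_le x s k]
  rw [← neg_nonneg, ← map_neg, hat, map_add]
  exact add_nonneg (hD 1 L _ (hL.mono (le_max_left _ _)) hdeg)
    (hD' _ L _ (.aeval_genericSegment_ballPoly (hL.mono (le_max_right _ _))
      (hball.mono (D'.le_succ.trans (le_max_right _ _))) hx hs) hdeg)

theorem HasConcavityCertificate.exists_localizingNonneg_imp_map_le_peval
    {g : MvPolynomial (Fin n) ℝ} (hg : HasConcavityCertificate g u δ) :
    ∃ D, ∀ (L : Module.Dual ℝ (MvPolynomial (Fin n) ℝ)) (x : Rn n), LocalizingNonneg 1 D L →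
      LocalizingNonneg (ballPoly u δ) D L → 0 ≤ peval (ballPoly u δ) x → L 1 = 1 →
        (∀ i, L (X i) = x i) → L g ≤ peval g x := by
  obtain ⟨D, hD⟩ := hg.exists_localizingNonneg_imp_map_hessianForm_nonpos
  refine ⟨D, fun L x hL hball hx h1 hmean => ?_⟩
  simpa [peval] using map_aeval_le_eval L h1 hmean fun s hs => hD L x s hL hball hx hs

theorem LocalizingNonneg.map_ballPoly_le_peval (hL : LocalizingNonneg 1 1 L) (h1 : L 1 = 1)
    {x : Rn n} (hmean : ∀ i, L (X i) = x i) : L (ballPoly u δ) ≤ peval (ballPoly u δ) x := by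
  have hball : ballPoly u δ = peval (ballPoly u δ) x • 1 -
      ∑ i, ((2 * (x i - u i)) • deviation x i + 1 * deviation x i ^ 2) := by
    have hcoord (i : Fin n) : (X i - C (u i)) ^ 2 =
        C ((x i - u i) ^ 2) + ((2 * (x i - u i)) • deviation x i + 1 * deviation x i ^ 2) := by
      simp only [deviation, Pi.sub_apply, Function.comp_apply, algebraMap_eq, smul_eq_C_mul,
        map_sub, map_mul, map_pow, map_ofNat]
      ring
    rw [peval_ballPoly, ballPoly]
    simp only [hcoord, Finset.sum_add_distrib, smul_eq_C_mul, mul_one, map_sub, map_pow, map_sum]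
    ring
  have hdev (i : Fin n) : L (deviation x i) = 0 := by
    rw [deviation, Pi.sub_apply, map_sub, Function.comp_apply, Algebra.algebraMap_eq_smul_one,
      map_smul, h1, hmean, smul_eq_mul, mul_one, sub_self]
  have hsq (i : Fin n) : 0 ≤ L (1 * deviation x i ^ 2) := hL _ (totalDegree_deviation_le x i)
  calc L (ballPoly u δ)
      = peval (ballPoly u δ) x - ∑ i, L (1 * deviation x i ^ 2) := by
        conv_lhs => rw [hball]
        simp [h1, hdev]
    _ ≤ peval (ballPoly u δ) x := sub_le_self _ (Finset.sum_nonneg fun i _ => hsq i)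

/-- The linear map sending a functional on polynomials to its mean, the vector of its values at the
coordinates. -/
def momentMean (n : ℕ) : Module.Dual ℝ (MvPolynomial (Fin n) ℝ) →ₗ[ℝ] Rn n :=
  (WithLp.linearEquiv 2 ℝ (Fin n → ℝ)).symm.toLinearMap ∘ₗ
    LinearMap.pi fun i => Module.Dual.eval ℝ _ (X i)

variable {ι : Type*}

/-- The Lasserre moment relaxation of order `D` of
`closedBall u δ ∩ {x | ∀ i, 0 ≤ peval (g i) x}`. -/
def momentRelaxation (g : ι → MvPolynomial (Fin n) ℝ) (u : Rn n) (δ : ℝ) (D : ℕ) :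
    Set (Module.Dual ℝ (MvPolynomial (Fin n) ℝ)) :=
  {L | L 1 = 1 ∧ LocalizingNonneg 1 D L ∧ LocalizingNonneg (ballPoly u δ) D L ∧ ∀ i, 0 ≤ L (g i)}

theorem isSpectrahedron_momentRelaxation [Finite ι] (g : ι → MvPolynomial (Fin n) ℝ) (u : Rn n)
    (δ : ℝ) (D : ℕ) : IsSpectrahedron (momentRelaxation g u δ D) := by
  convert (isSpectrahedron_setOf_eq 1 (Module.Dual.eval ℝ _ 1)).inter
    ((isSpectrahedron_setOf_localizingNonneg 1 D).inter
      ((isSpectrahedron_setOf_localizingNonneg (ballPoly u δ) D).inter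
        (isSpectrahedron_iInter fun i => isSpectrahedron_setOf_le 0 (Module.Dual.eval ℝ _ (g i)))))
  ext L
  simp [momentRelaxation]

theorem aeval_mem_momentRelaxation {g : ι → MvPolynomial (Fin n) ℝ} {x : Rn n}
    (hx : 0 ≤ peval (ballPoly u δ) x) (hg : ∀ i, 0 ≤ peval (g i) x) (D : ℕ) :
    (aeval x).toLinearMap ∈ momentRelaxation g u δ D := by
  have hsq {q : MvPolynomial (Fin n) ℝ} (hq : 0 ≤ peval q x) :
      LocalizingNonneg q D (aeval x).toLinearMap := fun p _ => by
    simpa [peval] using mul_nonneg hq (sq_nonneg (peval p x))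
  exact ⟨by simp, hsq (by simp [peval]), hsq hx, hg⟩

theorem isSpectrahedralShadow_closedBall_inter [Finite ι] (hδ : 0 ≤ δ)
    {g : ι → MvPolynomial (Fin n) ℝ} (hg : ∀ i, HasConcavityCertificate (g i) u δ) :
    IsSpectrahedralShadow (closedBall u δ ∩ {x | ∀ i, 0 ≤ peval (g i) x}) := by
  choose d hd using fun i => (hg i).exists_localizingNonneg_imp_map_le_peval
  obtain ⟨D, hD⟩ := Finite.exists_le d
  refine ⟨_, inferInstance, inferInstance, momentRelaxation g u δ (max D 1), momentMean n,
    isSpectrahedron_momentRelaxation g u δ _, ?_⟩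
  ext x
  constructor
  · rintro ⟨L, ⟨h1, hL, hball, hgL⟩, rfl⟩
    have hmean (i : Fin n) : L (X i) = momentMean n L i := rfl
    have hx : 0 ≤ peval (ballPoly u δ) (momentMean n L) :=
      (by simpa using hball 1 (by simp) : 0 ≤ L (ballPoly u δ)).trans
        ((hL.mono (le_max_right _ _)).map_ballPoly_le_peval h1 hmean)
    exact ⟨(peval_ballPoly_nonneg_iff hδ).1 hx, fun i => (hgL i).trans
      (hd i L _ (hL.mono ((hD i).trans (le_max_left _ _)))
        (hball.mono ((hD i).trans (le_max_left _ _))) hx h1 hmean)⟩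
  · rintro ⟨hx, hgx⟩
    refine ⟨_, aeval_mem_momentRelaxation ((peval_ballPoly_nonneg_iff hδ).2 hx) hgx _, ?_⟩
    ext i
    simp [momentMean]

end MomentRelaxation

section ConvexBoundary

variable {n : ℕ} {T : Set (Rn n)}

theorem isCompact_convexBoundary (hT : IsCompact T) : IsCompact (convexBoundary T) := by
  have hclosed : IsClosed
      {p : Rn n × Rn n | ∀ x ∈ T, ∑ i, p.2 i * p.1 i ≤ ∑ i, p.2 i * x i} := by
    simp only [ofPred_forall]
    exact isClosed_biInter fun x _ => isClosed_le (by fun_prop) (by fun_prop)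
  convert ((hT.prod (isCompact_sphere (0 : Rn n) 1)).inter_right hclosed).image continuous_fst
  ext u
  simp [convexBoundary, and_assoc]

theorem exists_mem_convexBoundary_forall_le (hT : IsCompact T) (hne : T.Nonempty) {l : Rn n}
    (hl : l ≠ 0) : ∃ u ∈ convexBoundary T, ∀ x ∈ T, ∑ i, l i * u i ≤ ∑ i, l i * x i := by
  obtain ⟨u, hu, hmin⟩ := hT.exists_isMinOn hne (f := fun x => ∑ i, l i * x i) (by fun_prop)
  refine ⟨u, ⟨hu, ‖l‖⁻¹ • l, norm_smul_inv_norm hl, fun x hx => ?_⟩, fun x hx => hmin hx⟩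
  simpa [Finset.mul_sum, mul_assoc] using
    mul_le_mul_of_nonneg_left (hmin hx) (inv_nonneg.2 (norm_nonneg l))

theorem convexBoundary_nonempty [Nontrivial (Rn n)] (hT : IsCompact T) (hne : T.Nonempty) :
    (convexBoundary T).Nonempty := by
  obtain ⟨l, hl⟩ := exists_ne (0 : Rn n)
  obtain ⟨u, hu, -⟩ := exists_mem_convexBoundary_forall_le hT hne hl
  exact ⟨u, hu⟩

theorem subset_of_convexBoundary_subset [Nontrivial (Rn n)] (hT : IsCompact T) {P : Set (Rn n)}
    (hP : IsClosed P) (hPc : Convex ℝ P) (h : convexBoundary T ⊆ P) : T ⊆ P := by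
  intro x hx
  by_contra hxP
  obtain ⟨p, hp⟩ := convexBoundary_nonempty hT ⟨x, hx⟩
  obtain ⟨φ, c, hφx, hφP⟩ := geometric_hahn_banach_point_closed hPc hP hxP
  let l := (InnerProductSpace.toDual ℝ (Rn n)).symm φ
  have hl (y : Rn n) : φ y = ∑ i, l i * y i := by
    rw [← InnerProductSpace.toDual_symm_apply, PiLp.inner_apply]
    exact Finset.sum_congr rfl fun i _ => mul_comm _ _
  have hl0 : l ≠ 0 := by
    intro hl0
    have hφ (y : Rn n) : φ y = 0 := by simp [hl, hl0]
    exact lt_irrefl (0 : ℝ) (by simpa [hφ] using hφx.trans (hφP p (h hp)))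
  obtain ⟨u, hu, hmin⟩ := exists_mem_convexBoundary_forall_le hT ⟨x, hx⟩ hl0
  simp only [← hl] at hmin
  exact (hφx.trans (hφP u (h hu))).not_ge (hmin x hx)

theorem isSpectrahedralShadow_of_subsingleton {F : Type} [AddCommGroup F] [Module ℝ F]
    [Subsingleton F] (S : Set F) : IsSpectrahedralShadow S := by
  have hS : IsSpectrahedron S := by
    rcases S.eq_empty_or_nonempty with rfl | hne
    · exact isSpectrahedron_empty
    · rw [Subsingleton.eq_univ_of_nonempty hne]
      exact isSpectrahedron_univ
  exact ⟨F, _, _, S, .id, hS, image_id S⟩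

theorem isSpectrahedralShadow_convexHull_of_inter_closedBall (hT : IsCompact T)
    (hloc : ∀ u ∈ convexBoundary T, ∃ δ > 0, IsSpectrahedralShadow (closedBall u δ ∩ T)) :
    IsSpectrahedralShadow (convexHull ℝ T) := by
  rcases subsingleton_or_nontrivial (Rn n)
  · exact isSpectrahedralShadow_of_subsingleton _
  choose! δ hδ hshadow using hloc
  obtain ⟨s, hs, hcover⟩ := (isCompact_convexBoundary hT).elim_nhds_subcover
    (fun u => closedBall u (δ u)) fun u hu => closedBall_mem_nhds u (hδ u hu)
  let A (u : Rn n) : Set (Rn n) := closedBall u (δ u) ∩ T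
  obtain ⟨hcompact, hhull⟩ := isCompact_and_isSpectrahedralShadow_convexHull_biUnion (A := A) s
    fun u hu => ⟨hT.inter_left isClosed_closedBall, hshadow u (hs u hu)⟩
  have hsub : T ⊆ convexHull ℝ (⋃ u ∈ s, A u) :=
    subset_of_convexBoundary_subset hT hcompact.isClosed (convex_convexHull ℝ _) fun u hu =>
      subset_convexHull ℝ _ <| by
        obtain ⟨v, hv, huv⟩ := mem_iUnion₂.1 (hcover hu)
        exact mem_iUnion₂.2 ⟨v, hv, huv, hu.1⟩
  have hsup : ⋃ u ∈ s, A u ⊆ T := iUnion₂_subset fun u _ => inter_subset_right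
  rwa [(convexHull_min hsub (convex_convexHull ℝ _)).antisymm (convexHull_mono hsup)]

end ConvexBoundary

section SemialgebraicSet

variable {n : ℕ} {ι : Type*} [Finite ι] {f : ι → MvPolynomial (Fin n) ℝ}

theorem exists_isSpectrahedralShadow_closedBall_inter {u : Rn n} (hu : ∀ i, 0 ≤ peval (f i) u)
    (h : ∀ i, peval (f i) u = 0 → SosConcave (f i) ∨ StrictlyQuasiConcaveAt (f i) u) :
    ∃ δ > 0, IsSpectrahedralShadow (closedBall u δ ∩ {x | ∀ i, 0 ≤ peval (f i) x}) := by
  choose g hg using fun i => exists_eventually_hasConcavityCertificate (hu i) (h i)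
  obtain ⟨δ, hgδ, hδ⟩ := ((eventually_all.2 hg).and self_mem_nhdsWithin).exists
  refine ⟨δ, hδ, ?_⟩
  convert isSpectrahedralShadow_closedBall_inter hδ.le fun i => (hgδ i).1 using 1
  ext x
  exact and_congr_right fun hx => forall_congr' fun i => ((hgδ i).2 x hx).symm

theorem isSDPRepresentable_convexHull_basic_general {T : Set (Rn n)}
    (hT : T = {x : Rn n | ∀ i, 0 ≤ peval (f i) x}) (hcpt : IsCompact T)
    (h : ∀ u ∈ convexBoundary T, ∀ i, peval (f i) u = 0 →
      SosConcave (f i) ∨ StrictlyQuasiConcaveAt (f i) u) :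
    IsSDPRepresentable (convexHull ℝ T) := by
  subst hT
  exact (isSpectrahedralShadow_convexHull_of_inter_closedBall hcpt fun u hu =>
    exists_isSpectrahedralShadow_closedBall_inter hu.1 (h u hu)).isSDPRepresentable

end SemialgebraicSet

/-- sufficient conditions for SDP representability of the convex hull
of a compact basic closed semialgebraic set with interior near the convex boundary. -/
theorem isSDPRepresentable_convexHull_basic {n m : ℕ}
    (f : Fin m → MvPolynomial (Fin n) ℝ) (T : Set (Rn n))
    (hT : T = {x : Rn n | ∀ i, 0 ≤ peval (f i) x})
    (hcpt : IsCompact T)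
    (hint : ∀ u ∈ convexBoundary T, ∀ δ > 0, ∃ v ∈ ball u δ, ∀ i, 0 < peval (f i) v)
    (h : ∀ u ∈ convexBoundary T, ∀ i, peval (f i) u = 0 →
      SosConcave (f i) ∨ StrictlyQuasiConcaveAt (f i) u) :
    IsSDPRepresentable (convexHull ℝ T) :=
  isSDPRepresentable_convexHull_basic_general hT hcpt h
end
end

section
/- Let T = ⋃_{k=1}^L Tₖ be a compact set, where each Tₖ = { x ∈ ℝⁿ : fᵏ₁(x) ≥ 0, …, fᵏ_{mₖ}(x) ≥ 0 } is defined by real polynomials fᵏᵢ, and assume conv(T) is SDP representable. Let u ∈ ∂_cT ∩ ∂Tₖ with fᵏᵢ(u) = 0. If fᵏᵢ is nonsingular at u (i.e., ∇fᵏᵢ(u) ≠ 0) and irredundant at u with respect to ∂conv(T), then fᵏᵢ is quasi-concave at u. -/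
open MvPolynomial Metric Set Pointwise Filter

noncomputable section

/-!
Suppose `g` is not quasi-concave at a boundary point `w` of a convex set `C` that contains
`{g > 0}` near `w`, where `g w = 0`. Then some tangent direction `v` has `vᵀ∇²g(w)v > 0`, so `g`
is positive at both `w + tv` and `w - tv` for small `t ≠ 0`. Both points are then interior to `C`,
and hence so is their midpoint `w`, a contradiction. At an irredundant point `u` this applies to
boundary points `w` converging to `u`; since `∇g(u) ≠ 0`, tangent vectors at `u` are limits of
tangent vectors at the `w`, so quasi-concavity passes to the limit.
-/

open scoped Topology Matrix

lemma mem_interior_of_eventually_add_smul_mem_interior {E : Type*} [AddCommGroup E] [Module ℝ E]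
    [TopologicalSpace E] [IsTopologicalAddGroup E] [ContinuousConstSMul ℝ E] {C : Set E}
    (hC : Convex ℝ C) {w v : E} (h : ∀ᶠ t in 𝓝[≠] (0 : ℝ), w + t • v ∈ interior C) :
    w ∈ interior C := by
  obtain ⟨ε, hε, hball⟩ := Metric.eventually_nhds_iff.1 (eventually_nhdsWithin_iff.1 h)
  have hplus : w + (ε / 2) • v ∈ interior C :=
    hball (by simpa [abs_of_pos hε] using hε) (by simpa using hε.ne')
  have hminus : w + (-(ε / 2)) • v ∈ interior C :=
    hball (by simpa [abs_of_pos hε] using hε) (by simpa using hε.ne')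
  have hmid : midpoint ℝ (w + (ε / 2) • v) (w + (-(ε / 2)) • v) = w := by
    rw [midpoint_eq_smul_add, invOf_eq_inv]
    module
  exact hmid ▸ hC.interior.midpoint_mem hplus hminus

lemma eventually_lt_of_second_deriv_pos {f f' : ℝ → ℝ} {f'' x₀ : ℝ}
    (hf : ∀ᶠ x in 𝓝 x₀, HasDerivAt f (f' x) x) (hf' : HasDerivAt f' f'' x₀)
    (h₁ : f' x₀ = 0) (h₂ : 0 < f'') : ∀ᶠ x in 𝓝[≠] x₀, f x₀ < f x := by
  -- Subtracting `(f'' / 4) (x - x₀)²` keeps the second derivative positive, so the non-strict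
  -- second-derivative test already leaves a quadratic margin.
  let φ : ℝ → ℝ := fun x ↦ f x - f'' / 4 * (x - x₀) ^ 2
  have hφ : ∀ᶠ x in 𝓝 x₀, HasDerivAt φ (f' x - f'' / 2 * (x - x₀)) x := by
    filter_upwards [hf] with x hx
    exact (hx.sub ((((hasDerivAt_id x).sub_const x₀).pow 2).const_mul (f'' / 4))).congr_deriv
      (by simp only [id]; ring)
  have hφ' : HasDerivAt (fun x ↦ f' x - f'' / 2 * (x - x₀)) (f'' / 2) x₀ :=
    (hf'.sub (((hasDerivAt_id x₀).sub_const x₀).const_mul (f'' / 2))).congr_deriv (by ring)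
  have hderiv : deriv φ =ᶠ[𝓝 x₀] fun x ↦ f' x - f'' / 2 * (x - x₀) := hφ.mono fun _ h ↦ h.deriv
  have hmin : IsLocalMin φ x₀ := isLocalMin_of_deriv_deriv_pos
    (by simpa [hderiv.deriv_eq, hφ'.deriv] using h₂) (by simp [hderiv.eq_of_nhds, h₁])
    hφ.self_of_nhds.continuousAt
  filter_upwards [nhdsWithin_le_nhds hmin, self_mem_nhdsWithin] with x hx hne
  have hmargin : 0 < f'' / 4 * (x - x₀) ^ 2 :=
    mul_pos (by positivity) (sq_pos_of_ne_zero (sub_ne_zero.2 hne))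
  simp only [φ] at hx
  linarith

section Polynomial

variable {n : ℕ} {g : MvPolynomial (Fin n) ℝ} {u w : Rn n}

lemma peval_C (c : ℝ) : peval (C c : MvPolynomial (Fin n) ℝ) = fun _ ↦ c := by
  ext; simp [peval]

lemma peval_add (p q : MvPolynomial (Fin n) ℝ) : peval (p + q) = peval p + peval q := by
  ext; simp [peval]

lemma peval_mul (p q : MvPolynomial (Fin n) ℝ) : peval (p * q) = peval p * peval q := by
  ext; simp [peval]

lemma peval_X (a : Fin n) : peval (X a) = fun x ↦ x a := by
  ext; simp [peval]

lemma pgrad_C (c : ℝ) (x : Rn n) : pgrad (C c) x = 0 := by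
  ext; simp [pgrad]

lemma pgrad_add (p q : MvPolynomial (Fin n) ℝ) (x : Rn n) :
    pgrad (p + q) x = pgrad p x + pgrad q x := by
  ext; simp [pgrad]

lemma pgrad_mul (p q : MvPolynomial (Fin n) ℝ) (x : Rn n) :
    pgrad (p * q) x = peval p x • pgrad q x + peval q x • pgrad p x := by
  ext; simp [pgrad, peval]

lemma pgrad_X (a : Fin n) (x : Rn n) : pgrad (X a) x = Pi.single a 1 := by
  ext b; simp [pgrad, pderiv_X, Pi.single_apply, eq_comm]

lemma hasGradientAt_peval (g : MvPolynomial (Fin n) ℝ) (x : Rn n) :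
    HasGradientAt (peval g) (WithLp.toLp 2 (pgrad g x)) x := by
  rw [hasGradientAt_iff_hasFDerivAt]
  induction g using MvPolynomial.induction_on with
  | C c => simpa [peval_C, pgrad_C] using hasFDerivAt_const c x
  | add p q hp hq =>
    rw [peval_add, pgrad_add]
    exact (hp.add hq).congr_fderiv (by simp)
  | mul_X p a hp =>
    have hX : HasFDerivAt (peval (X a))
        (InnerProductSpace.toDual ℝ (Rn n) (WithLp.toLp 2 (pgrad (X a) x))) x := by
      rw [peval_X, pgrad_X]
      exact (EuclideanSpace.proj (𝕜 := ℝ) a).hasFDerivAt.congr_fderiv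
        (by ext; simp [EuclideanSpace.inner_single_left])
    rw [peval_mul, pgrad_mul]
    exact (hp.mul hX).congr_fderiv (by simp)

lemma continuous_peval (g : MvPolynomial (Fin n) ℝ) : Continuous (peval g) :=
  (MvPolynomial.continuous_eval g).comp (by fun_prop)

lemma continuous_pgrad (g : MvPolynomial (Fin n) ℝ) : Continuous (pgrad g) :=
  continuous_pi fun a ↦ continuous_peval (pderiv a g)

lemma continuous_phess (g : MvPolynomial (Fin n) ℝ) : Continuous (phess g) :=
  continuous_matrix fun a b ↦ continuous_peval (pderiv a (pderiv b g))

lemma hasDerivAt_peval_line (g : MvPolynomial (Fin n) ℝ) (w v : Rn n) (t : ℝ) :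
    HasDerivAt (fun t : ℝ ↦ peval g (w + t • v)) (pgrad g (w + t • v) ⬝ᵥ v) t := by
  have hline : HasDerivAt (fun t : ℝ ↦ w + t • v) v t := by
    simpa using ((hasDerivAt_id t).smul_const v).const_add w
  refine ((hasGradientAt_peval g (w + t • v)).hasFDerivAt.comp_hasDerivAt t hline).congr_deriv ?_
  simp [PiLp.inner_apply, dotProduct, mul_comm]

lemma hasDerivAt_pgrad_dotProduct_line (g : MvPolynomial (Fin n) ℝ) (w v : Rn n) (t : ℝ) :
    HasDerivAt (fun t : ℝ ↦ pgrad g (w + t • v) ⬝ᵥ v) (v ⬝ᵥ phess g (w + t • v) *ᵥ v) t := by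
  refine (HasDerivAt.fun_sum (u := Finset.univ) fun b _ ↦
    (hasDerivAt_peval_line (pderiv b g) w v t).mul_const (v b)).congr_deriv ?_
  simp only [dotProduct, Matrix.mulVec, phess, pgrad, Matrix.of_apply, Finset.mul_sum,
    Finset.sum_mul]
  rw [Finset.sum_comm]
  exact Finset.sum_congr rfl fun a _ ↦ Finset.sum_congr rfl fun b _ ↦ by ring

lemma quasiConcaveAt_iff :
    QuasiConcaveAt g u ↔ ∀ v, pgrad g u ⬝ᵥ v = 0 → v ⬝ᵥ phess g u *ᵥ v ≤ 0 := by
  simp [QuasiConcaveAt, dotProduct, Matrix.mulVec, Finset.mul_sum, mul_assoc]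

lemma QuasiConcaveAt.of_mem_closure (hgrad : pgrad g u ≠ 0)
    (hu : u ∈ closure {w | QuasiConcaveAt g w}) : QuasiConcaveAt g u := by
  rw [quasiConcaveAt_iff]
  intro v hv
  let e := pgrad g u
  have hee : pgrad g u ⬝ᵥ e ≠ 0 := by simpa [e, dotProduct_self_eq_zero] using hgrad
  have hcont (z : Fin n → ℝ) : Continuous fun x ↦ pgrad g x ⬝ᵥ z :=
    (continuous_pgrad g).dotProduct continuous_const
  -- `v` projected along `e` onto the tangent hyperplane at `x` of the level set of `g`.
  let τ : Rn n → Fin n → ℝ := fun x ↦ v - (pgrad g x ⬝ᵥ v / pgrad g x ⬝ᵥ e) • e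
  have hτu : τ u = v := by simp [τ, hv]
  have hτ_tangent : ∀ᶠ x in 𝓝 u, pgrad g x ⬝ᵥ τ x = 0 := by
    filter_upwards [(hcont e).continuousAt.eventually_ne hee] with x hx
    simp [τ, dotProduct_sub, dotProduct_smul, hx]
  have hτ_cont : ContinuousAt τ u :=
    continuousAt_const.sub
      (((hcont v).continuousAt.div (hcont e).continuousAt hee).smul continuousAt_const)
  have hform : Tendsto (fun x ↦ τ x ⬝ᵥ phess g x *ᵥ τ x) (𝓝 u) (𝓝 (v ⬝ᵥ phess g u *ᵥ v)) := by
    have hq : Continuous fun p : (Fin n → ℝ) × Matrix (Fin n) (Fin n) ℝ ↦ p.1 ⬝ᵥ p.2 *ᵥ p.1 :=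
      continuous_fst.dotProduct (continuous_snd.matrix_mulVec continuous_fst)
    have hcomp := hq.continuousAt.comp (hτ_cont.prodMk (continuous_phess g).continuousAt)
    simpa [ContinuousAt, Function.comp_def, hτu] using hcomp
  refine le_of_tendsto_of_frequently hform ?_
  exact ((mem_closure_iff_frequently.1 hu).and_eventually hτ_tangent).mono
    fun x hx ↦ quasiConcaveAt_iff.1 hx.1 _ hx.2

lemma quasiConcaveAt_of_notMem_interior {C : Set (Rn n)} (hC : Convex ℝ C)
    (hw : peval g w = 0) (hwC : w ∉ interior C) (hgC : ∀ᶠ x in 𝓝 w, 0 < peval g x → x ∈ C) :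
    QuasiConcaveAt g w := by
  rw [quasiConcaveAt_iff]
  intro v hv
  by_contra! hcurv
  let V : Rn n := WithLp.toLp 2 v
  have hpos : ∀ᶠ t in 𝓝[≠] (0 : ℝ), 0 < peval g (w + t • V) := by
    simpa [hw] using eventually_lt_of_second_deriv_pos
      (.of_forall (hasDerivAt_peval_line g w V)) (hasDerivAt_pgrad_dotProduct_line g w V 0)
      (by simpa [V] using hv) (by simpa [V] using hcurv)
  have hinterior : ∀ᶠ x in 𝓝 w, 0 < peval g x → x ∈ interior C := by
    filter_upwards [eventually_eventually_nhds.2 hgC] with x hx hgx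
    rw [mem_interior_iff_mem_nhds]
    filter_upwards [hx, (continuous_peval g).continuousAt.eventually_const_lt hgx] with y hy hgy
    exact hy hgy
  have hline : Tendsto (fun t : ℝ ↦ w + t • V) (𝓝[≠] 0) (𝓝 w) :=
    tendsto_nhdsWithin_of_tendsto_nhds (Continuous.tendsto' (by fun_prop) _ _ (by simp))
  refine hwC (mem_interior_of_eventually_add_smul_mem_interior hC (v := V) ?_)
  filter_upwards [hpos, hline.eventually hinterior] with t ht hmem using hmem ht

lemma isClosed_setOf_forall_peval_nonneg {ι : Type*} (f : ι → MvPolynomial (Fin n) ℝ) :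
    IsClosed {x : Rn n | ∀ i, 0 ≤ peval (f i) x} := by
  simpa only [ofPred_forall] using
    isClosed_iInter fun i ↦ isClosed_le continuous_const (continuous_peval (f i))

lemma eventually_forall_peval_nonneg_of_pos {ι : Type*} [Finite ι]
    {f : ι → MvPolynomial (Fin n) ℝ} {i : ι} (hpos : ∀ j ≠ i, 0 < peval (f j) w) :
    ∀ᶠ x in 𝓝 w, 0 < peval (f i) x → ∀ j, 0 ≤ peval (f j) x := by
  have hev : ∀ᶠ x in 𝓝 w, ∀ j, j ≠ i → 0 < peval (f j) x :=
    eventually_all.2 fun j ↦ eventually_imp_distrib_left.2 fun hj ↦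
      (continuous_peval (f j)).continuousAt.eventually_const_lt (hpos j hj)
  filter_upwards [hev] with x hx hi j
  obtain rfl | hj := eq_or_ne j i
  exacts [hi.le, (hx j hj).le]

lemma IsNonsingularBoundaryPoint.peval_pos {m : ℕ} {f : Fin m → MvPolynomial (Fin n) ℝ}
    (hw : IsNonsingularBoundaryPoint f {x | ∀ i, 0 ≤ peval (f i) x} w) {i j : Fin m}
    (hi : peval (f i) w = 0) (hj : j ≠ i) : 0 < peval (f j) w := by
  obtain ⟨hfrontier, i₀, -, -, hunique⟩ := hw
  have hmem := (isClosed_setOf_forall_peval_nonneg f).frontier_subset hfrontier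
  exact (hmem j).lt_of_ne' fun h ↦ hj ((hunique j h).trans (hunique i hi).symm)

end Polynomial

theorem quasiConcaveAt_of_sdpRepresentable_convexHull_general {n m : ℕ}
    (f : Fin m → MvPolynomial (Fin n) ℝ) {C : Set (Rn n)} (hC : Convex ℝ C)
    (hfC : {x | ∀ i, 0 ≤ peval (f i) x} ⊆ C) (i : Fin m) {u : Rn n}
    (hns : pgrad (f i) u ≠ 0)
    (hirr : u ∈ closure {w | peval (f i) w = 0 ∧ w ∈ frontier C ∧
      IsNonsingularBoundaryPoint f {x | ∀ j, 0 ≤ peval (f j) x} w}) :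
    QuasiConcaveAt (f i) u := by
  refine .of_mem_closure hns (closure_mono ?_ hirr)
  rintro w ⟨hw, hwC, hwns⟩
  refine quasiConcaveAt_of_notMem_interior hC hw hwC.2 ?_
  exact (eventually_forall_peval_nonneg_of_pos fun _ ↦ hwns.peval_pos hw).mono
    fun x hx hix ↦ hfC (hx hix)

/-- necessary condition for SDP representability of convex hulls —
a nonsingular, irredundant defining polynomial vanishing at `u ∈ ∂_cT ∩ ∂Tₖ`
is quasi-concave at `u`. -/
theorem quasiConcaveAt_of_sdpRepresentable_convexHull {n L : ℕ}
    (mk : Fin L → ℕ) (f : ∀ k, Fin (mk k) → MvPolynomial (Fin n) ℝ)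
    (T : Fin L → Set (Rn n))
    (hT : ∀ k, T k = {x : Rn n | ∀ i, 0 ≤ peval (f k i) x})
    (Tun : Set (Rn n)) (hTun : Tun = ⋃ k, T k) (hcpt : IsCompact Tun)
    (hsdp : IsSDPRepresentable (convexHull ℝ Tun))
    (k : Fin L) (i : Fin (mk k)) (u : Rn n)
    (hu : u ∈ convexBoundary Tun ∩ frontier (T k))
    (hfu : peval (f k i) u = 0)
    (hns : pgrad (f k i) u ≠ 0)
    (hirr : ∃ w : ℕ → Rn n, Tendsto w atTop (nhds u) ∧
      ∀ N : ℕ, peval (f k i) (w N) = 0 ∧ w N ∈ frontier (convexHull ℝ Tun) ∧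
        IsNonsingularBoundaryPoint (f k) (T k) (w N)) :
    QuasiConcaveAt (f k i) u := by
  obtain ⟨w, hwu, hw⟩ := hirr
  refine quasiConcaveAt_of_sdpRepresentable_convexHull_general (f k) (convex_convexHull ℝ Tun)
    ?_ i hns (mem_closure_of_tendsto hwu (.of_forall fun N ↦ hT k ▸ hw N))
  exact hT k ▸ hTun ▸ (subset_iUnion T k).trans (subset_convexHull ℝ _)
end
end
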